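/- arXiv:math/0703416 — 5 statements merged into one kernel-verified Lean document; each statement's English description precedes it below -/
import Mathlib

section
/- Let P be a simplicial reflexive d-polytope, F a facet of P, and v a vertex of F. Then for every point x ∈ P one has ⟨u_F, x⟩ - 1 ≤ ⟨u_F^v, x⟩, and if equality holds then x lies on the neighboring facet N(F,v). -/
/-!
Let `u'` be the integral functional with value `1` on `F' = N(F, v)`. The functionals `u'` and
`u_F - k • u_F^v`, with `k = 1 - ⟨u', v⟩`, agree at every vertex of `F`, and the vertices of `F`
span `ℝ^d` (`Polytope.IsFacet.eq_of_eqOn_vertsOn`), so they are equal. Since `u'` and `v` are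
integral, `k` is an integer; since `⟨u', v⟩ ≤ 1` with equality only if `v ∈ F'`, which would force
`F = F'`, we have `k ≥ 1`. For `x ∈ P` the inequalities `⟨u', x⟩ ≤ 1` and `⟨u_F, x⟩ ≤ 1` read
`⟨u_F, x⟩ - 1 ≤ k ⟨u_F^v, x⟩` and `⟨u_F, x⟩ - 1 ≤ 0`, which together give
`⟨u_F, x⟩ - 1 ≤ ⟨u_F^v, x⟩`. If equality holds, then `(k - 1)(⟨u_F, x⟩ - 1) = 0`, and hence
`⟨u', x⟩ = 1`, that is, `x ∈ F'`.
-/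

open Finset

/-- A point of `ℝ^d` is a lattice point if all of its coordinates are integers. -/
def IsLatticePt {d : ℕ} (x : Fin d → ℝ) : Prop := ∀ i, ∃ z : ℤ, x i = (z : ℝ)

/-- The pairing between `M_ℝ` and `N_ℝ`, both identified with `ℝ^d`. -/
noncomputable def pairing {d : ℕ} (u x : Fin d → ℝ) : ℝ := ∑ i, u i * x i

/-- The `i`-th standard basis vector of `ℝ^d`. -/
noncomputable def stdVec {d : ℕ} (i : Fin d) : Fin d → ℝ := Pi.single i 1

/-- A polytope in `ℝ^d`, given by its finite vertex set (each listed point is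
required to be an extreme point of the convex hull, i.e. a genuine vertex). -/
structure Polytope (d : ℕ) where
  verts : Finset (Fin d → ℝ)
  vertsExtreme : ∀ v ∈ verts,
    v ∈ Set.extremePoints ℝ (convexHull ℝ (verts : Set (Fin d → ℝ)))

namespace Polytope

variable {d : ℕ}

/-- The polytope as a subset of `ℝ^d`. -/
def carrier (P : Polytope d) : Set (Fin d → ℝ) :=
  convexHull ℝ (P.verts : Set (Fin d → ℝ))

/-- A proper face of `P`, cut out by a supporting hyperplane. -/
def IsFace (P : Polytope d) (F : Set (Fin d → ℝ)) : Prop :=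
  ∃ u : Fin d → ℝ, u ≠ 0 ∧ ∃ c : ℝ,
    (∀ x ∈ P.carrier, pairing u x ≤ c) ∧ F = {x ∈ P.carrier | pairing u x = c}

/-- A facet of `P`: a nonempty proper face of dimension `d - 1`. -/
def IsFacet (P : Polytope d) (F : Set (Fin d → ℝ)) : Prop :=
  P.IsFace F ∧ F.Nonempty ∧ Module.finrank ℝ (vectorSpan ℝ F) = d - 1

/-- The set of vertices of `P` lying on `F`. -/
def vertsOn (P : Polytope d) (F : Set (Fin d → ℝ)) : Set (Fin d → ℝ) :=
  {v | v ∈ P.verts ∧ v ∈ F}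

/-- `P` is simplicial if every facet has exactly `d` vertices. -/
def IsSimplicial (P : Polytope d) : Prop :=
  ∀ F, P.IsFacet F → (P.vertsOn F).ncard = d

/-- `P` is a lattice polytope. -/
def IsLattice (P : Polytope d) : Prop := ∀ v ∈ P.verts, IsLatticePt v

/-- `u` is the supporting functional `u_F` of the facet `F`, i.e. `⟨u, ·⟩ = 1` on `F`. -/
def IsUF (P : Polytope d) (F : Set (Fin d → ℝ)) (u : Fin d → ℝ) : Prop :=
  ∀ x ∈ F, pairing u x = 1

/-- `u` is the dual basis element `u_F^v`: it takes value `1` at the vertex `v` of `F`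
and `0` at all other vertices of `F`. -/
def IsDualBasisElt (P : Polytope d) (F : Set (Fin d → ℝ)) (v : Fin d → ℝ)
    (u : Fin d → ℝ) : Prop :=
  pairing u v = 1 ∧ ∀ w ∈ P.vertsOn F, w ≠ v → pairing u w = 0

/-- `P` is reflexive: it is a lattice polytope with `0` in its interior, and every
facet lies on a hyperplane `⟨u, ·⟩ = 1` with `u` integral (equivalently, the dual
polytope is a lattice polytope). -/
def IsReflexive (P : Polytope d) : Prop :=
  P.IsLattice ∧ 0 ∈ interior P.carrier ∧
    ∀ F, P.IsFacet F → ∃ u : Fin d → ℤ, P.IsUF F (fun i => (u i : ℝ))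

/-- `P` is terminal: the only lattice points of `P` are its vertices and the origin. -/
def IsTerminal (P : Polytope d) : Prop :=
  ∀ x ∈ P.carrier, IsLatticePt x → x = 0 ∨ x ∈ P.verts

/-- `F'` is the neighboring facet `N(F, v)`: the facet different from `F` containing
all vertices of `F` except `v`. -/
def IsNeighborFacet (P : Polytope d) (F : Set (Fin d → ℝ)) (v : Fin d → ℝ)
    (F' : Set (Fin d → ℝ)) : Prop :=
  P.IsFacet F' ∧ F' ≠ F ∧ ∀ w ∈ P.vertsOn F, w ≠ v → w ∈ F'

/-- `y` is the neighboring vertex `n(F, v)`: the unique vertex of `N(F, v)` not on `F`. -/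
def IsNeighborVertex (P : Polytope d) (F : Set (Fin d → ℝ)) (v : Fin d → ℝ)
    (y : Fin d → ℝ) : Prop :=
  ∃ F', P.IsNeighborFacet F v F' ∧ y ∈ P.vertsOn F' ∧ y ∉ F

/-- `F` is a special facet of `P`: the sum of all vertices of `P` is a nonnegative
linear combination of the vertices of `F`, i.e. `⟨u_F^w, ν_P⟩ ≥ 0` for every vertex
`w` of `F`. -/
def IsSpecialFacet (P : Polytope d) (F : Set (Fin d → ℝ)) : Prop :=
  P.IsFacet F ∧ ∀ w ∈ P.vertsOn F, ∀ uFw : Fin d → ℝ,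
    P.IsDualBasisElt F w uFw → 0 ≤ pairing uFw (∑ v ∈ P.verts, v)

end Polytope

/-- `S` is a `ℤ`-basis of the lattice `ℤ^d ⊆ ℝ^d`. -/
def IsLatticeBasis {d : ℕ} (S : Set (Fin d → ℝ)) : Prop :=
  ∃ v : Fin d → (Fin d → ℝ), Set.range v = S ∧
    ∀ x : Fin d → ℝ, (IsLatticePt x ↔ ∃ a : Fin d → ℤ, x = ∑ i, (a i : ℝ) • v i)

theorem pairing_eq_dotProduct {d : ℕ} (u x : Fin d → ℝ) : pairing u x = u ⬝ᵥ x := rfl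

namespace Polytope

variable {d : ℕ} {P : Polytope d} {F : Set (Fin d → ℝ)}

/-- A face is contained in the linear span of its vertices: in a convex combination of vertices
of `P` that lies on a supporting hyperplane, only vertices on that hyperplane have nonzero
weight. -/
theorem IsFace.subset_span_vertsOn (hF : P.IsFace F) :
    F ⊆ Submodule.span ℝ (P.vertsOn F) := by
  obtain ⟨u, -, c, hle, rfl⟩ := hF
  rintro x ⟨hxP, hxc⟩
  obtain ⟨w, hw0, hw1, rfl⟩ := Finset.mem_convexHull'.1 hxP
  have hmem : ∀ y ∈ P.verts, y ∈ P.carrier := fun y hy => subset_convexHull ℝ _ hy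
  have hsum : ∑ y ∈ P.verts, w y * (c - pairing u y) = 0 := by
    simp only [pairing_eq_dotProduct, dotProduct_sum, dotProduct_smul, smul_eq_mul] at hxc ⊢
    simp only [mul_sub, Finset.sum_sub_distrib, ← Finset.sum_mul, hw1, hxc]
    ring
  have hzero := (Finset.sum_eq_zero_iff_of_nonneg fun y hy =>
    mul_nonneg (hw0 y hy) (sub_nonneg.2 (hle y (hmem y hy)))).1 hsum
  refine Submodule.sum_mem _ fun y hy => ?_
  rcases mul_eq_zero.1 (hzero y hy) with h | h
  · simp [h]
  · exact Submodule.smul_mem _ _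
      (Submodule.subset_span ⟨hy, hmem y hy, (sub_eq_zero.1 h).symm⟩)

/-- A hyperplane supporting `P` does not pass through the interior point `0`. -/
theorem supporting_const_pos (h0 : 0 ∈ interior P.carrier) {u : Fin d → ℝ} (hu : u ≠ 0) {c : ℝ}
    (hle : ∀ x ∈ P.carrier, pairing u x ≤ c) : 0 < c := by
  have hnhds : P.carrier ∈ nhds (0 : Fin d → ℝ) := mem_interior_iff_mem_nhds.1 h0
  have htend : Filter.Tendsto (fun t : ℝ => t • u) (nhdsWithin 0 (Set.Ioi 0)) (nhds 0) := by
    have : Filter.Tendsto (fun t : ℝ => t • u) (nhds 0) (nhds ((0 : ℝ) • u)) :=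
      (continuous_id.smul continuous_const).tendsto 0
    rw [zero_smul] at this
    exact this.mono_left nhdsWithin_le_nhds
  -- a small positive multiple of `u` lies in `P` and pairs positively with `u`
  obtain ⟨t, ht, htpos⟩ := ((htend.eventually hnhds).and self_mem_nhdsWithin).exists
  have hle' := hle _ ht
  rw [pairing_eq_dotProduct, dotProduct_smul, smul_eq_mul] at hle'
  have huu : 0 < u ⬝ᵥ u :=
    lt_of_le_of_ne (Finset.sum_nonneg fun i _ => mul_self_nonneg (u i))
      fun h => hu (dotProduct_self_eq_zero.1 h.symm)
  exact (mul_pos htpos huu).trans_le hle'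

/-- Two functionals that agree at the vertices of a facet are equal: the linear span of the facet
contains the `(d - 1)`-dimensional direction of its affine hull, and strictly so, because that
hull misses `0`. -/
theorem IsFacet.eq_of_eqOn_vertsOn (h0 : 0 ∈ interior P.carrier) (hF : P.IsFacet F)
    {a b : Fin d → ℝ} (hab : ∀ w ∈ P.vertsOn F, pairing a w = pairing b w) : a = b := by
  obtain ⟨hface, ⟨p, hp⟩, hdim⟩ := hF
  have hspan := hface.subset_span_vertsOn
  obtain ⟨u, hu, c, hle, hFeq⟩ := hface
  have hc := supporting_const_pos h0 hu hle
  let f : (Fin d → ℝ) →ₗ[ℝ] ℝ := dotProductBilin ℝ ℝ (a - b)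
  let g : (Fin d → ℝ) →ₗ[ℝ] ℝ := dotProductBilin ℝ ℝ u
  have hf : ∀ x, f x = pairing a x - pairing b x := fun x => sub_dotProduct a b x
  have hFker : ∀ x ∈ F, x ∈ LinearMap.ker f := fun x hx =>
    Submodule.span_le.2 (fun w hw => by simp [hf, hab w hw]) (hspan hx)
  have hg : ∀ x ∈ F, g x = c := fun x hx => (hFeq.subset hx).2
  have hle1 : vectorSpan ℝ F ≤ LinearMap.ker f := by
    refine Submodule.span_le.2 ?_
    rintro _ ⟨x, hx, y, hy, rfl⟩
    exact sub_mem (hFker x hx) (hFker y hy)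
  have hle2 : vectorSpan ℝ F ≤ LinearMap.ker g := by
    refine Submodule.span_le.2 ?_
    rintro _ ⟨x, hx, y, hy, rfl⟩
    simp [hg x hx, hg y hy]
  have hlt : vectorSpan ℝ F < LinearMap.ker f := by
    refine lt_of_le_of_ne hle1 fun h => ?_
    have hpg : g p = 0 := hle2 (h ▸ hFker p hp)
    exact hc.ne' ((hg p hp).symm.trans hpg)
  have hrank := Submodule.finrank_lt_finrank_of_lt hlt
  have htop : LinearMap.ker f = ⊤ := by
    refine Submodule.eq_top_of_finrank_eq (le_antisymm (Submodule.finrank_le _) ?_)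
    rw [Module.finrank_fin_fun]
    omega
  have hzero : (a - b) ⬝ᵥ (a - b) = 0 := LinearMap.mem_ker.1 (htop ▸ Submodule.mem_top)
  exact sub_eq_zero.1 (dotProduct_self_eq_zero.1 hzero)

/-- The hyperplane `⟨u_F, ·⟩ = 1` supports `P` and cuts out exactly `F`. -/
theorem IsFacet.le_one_and_mem_iff (h0 : 0 ∈ interior P.carrier) (hF : P.IsFacet F)
    {uF : Fin d → ℝ} (huF : P.IsUF F uF) {x : Fin d → ℝ} (hx : x ∈ P.carrier) :
    pairing uF x ≤ 1 ∧ (x ∈ F ↔ pairing uF x = 1) := by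
  obtain ⟨u, hu, c, hle, hFeq⟩ := hF.1
  have hc := supporting_const_pos h0 hu hle
  -- a functional cutting out `F` becomes `u_F` once its value on `F` is scaled to `1`
  have hueq : u = c • uF := by
    refine hF.eq_of_eqOn_vertsOn h0 fun w hw => ?_
    have h1 := huF w hw.2
    have h2 : pairing u w = c := (hFeq.subset hw.2).2
    rw [pairing_eq_dotProduct] at h1
    rw [h2, pairing_eq_dotProduct, smul_dotProduct, h1, smul_eq_mul, mul_one]
  have hux : pairing u x = c * pairing uF x := by
    rw [hueq, pairing_eq_dotProduct, smul_dotProduct, smul_eq_mul, pairing_eq_dotProduct]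
  have hlex := hle x hx
  rw [hux] at hlex
  refine ⟨by nlinarith, fun h => huF x h, fun h => ?_⟩
  rw [hFeq]
  exact ⟨hx, by rw [hux, h, mul_one]⟩

end Polytope

theorem IsLatticePt.exists_pairing_eq_int {d : ℕ} {x : Fin d → ℝ} (hx : IsLatticePt x)
    (u : Fin d → ℤ) : ∃ n : ℤ, pairing (fun i => (u i : ℝ)) x = n := by
  choose z hz using hx
  exact ⟨∑ i, u i * z i, by simp [pairing, hz]⟩

/-- Lemma 2 (`coef_lemma`): for a simplicial reflexive `d`-polytope `P`, a facet `F`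
and a vertex `v` of `F`, every `x ∈ P` satisfies `⟨u_F, x⟩ - 1 ≤ ⟨u_F^v, x⟩`, and in
case of equality `x` lies on the neighboring facet `N(F, v)`. -/
theorem coef_lemma {d : ℕ} (P : Polytope d) (hrefl : P.IsReflexive)
    (hsimp : P.IsSimplicial)
    (F : Set (Fin d → ℝ)) (hF : P.IsFacet F)
    (v : Fin d → ℝ) (hv : v ∈ P.vertsOn F)
    (uF : Fin d → ℝ) (huF : P.IsUF F uF)
    (uFv : Fin d → ℝ) (huFv : P.IsDualBasisElt F v uFv)
    (F' : Set (Fin d → ℝ)) (hF' : P.IsNeighborFacet F v F') :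
    ∀ x ∈ P.carrier, pairing uF x - 1 ≤ pairing uFv x ∧
      (pairing uF x - 1 = pairing uFv x → x ∈ F') := by
  obtain ⟨hlat, h0, hintegral⟩ := hrefl
  obtain ⟨hfacet', hne, hsub⟩ := hF'
  obtain ⟨m, hu'⟩ := hintegral F' hfacet'
  set u' : Fin d → ℝ := fun i => (m i : ℝ)
  obtain ⟨n, hn⟩ : ∃ n : ℤ, pairing u' v = n := (hlat v hv.1).exists_pairing_eq_int m
  have hvP : v ∈ P.carrier := subset_convexHull ℝ _ hv.1
  have hu'eq : u' = uF - (1 - n : ℝ) • uFv := by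
    refine hF.eq_of_eqOn_vertsOn h0 fun w hw => ?_
    have hsplit : pairing (uF - (1 - n : ℝ) • uFv) w
        = pairing uF w - (1 - n) * pairing uFv w := by
      simp [pairing_eq_dotProduct, sub_dotProduct, smul_dotProduct]
    rw [hsplit, huF w hw.2]
    by_cases hwv : w = v
    · rw [hwv, huFv.1, hn]
      ring
    · rw [hu' w (hsub w hw hwv), huFv.2 w hw hwv]
      ring
  have hn0 : n ≤ 0 := by
    have hn1 : n ≤ 1 := by
      have := (hfacet'.le_one_and_mem_iff h0 hu' hvP).1
      rw [hn] at this
      exact_mod_cast this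
    have hn2 : n ≠ 1 := by
      rintro rfl
      have huu : u' = uF := by simpa using hu'eq
      apply hne
      have hcarrier : ∀ {G}, P.IsFacet G → G ⊆ P.carrier := by
        rintro G ⟨⟨_, _, _, _, rfl⟩, _⟩ x hx
        exact hx.1
      ext x
      constructor <;> intro hx
      · exact (hF.le_one_and_mem_iff h0 huF (hcarrier hfacet' hx)).2.2 (huu ▸ hu' x hx)
      · exact (hfacet'.le_one_and_mem_iff h0 hu' (hcarrier hF hx)).2.2 (huu ▸ huF x hx)
    omega
  have hn0' : (n : ℝ) ≤ 0 := by exact_mod_cast hn0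
  intro x hx
  obtain ⟨hx', hmem'⟩ := hfacet'.le_one_and_mem_iff h0 hu' hx
  obtain ⟨hxF, -⟩ := hF.le_one_and_mem_iff h0 huF hx
  have hsplit : pairing u' x = pairing uF x - (1 - n) * pairing uFv x := by
    rw [hu'eq]
    simp [pairing_eq_dotProduct, sub_dotProduct, smul_dotProduct]
  rw [hsplit] at hx'
  refine ⟨by nlinarith, fun heq => ?_⟩
  rw [hmem', hsplit]
  -- equality turns `hx'` into `n * (⟨u_F, x⟩ - 1) ≤ 0`, a product of two nonpositive factors
  nlinarith
end

section
/- Let P be a simplicial reflexive d-polytope, F a facet of P, and x a vertex of P with ⟨u_F, x⟩ = 0. Then x is a neighboring vertex of F; more precisely, for every vertex w of F with ⟨u_F^w, x⟩ < 0, x equals the neighboring vertex n(F,w). -/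
/-!
Write `⟨u, x⟩` for the pairing. Since the vertices of a facet `F` of a simplicial polytope with
the origin in its interior form a basis of `ℝ^d`, the functional of a neighboring facet
`F' = N(F, w)` is `u_{F'} = u_F + (⟨u_{F'}, w⟩ - 1) u_F^w`, as both sides agree on `V(F)`. Here
`⟨u_{F'}, w⟩ < 1`. Hence, if `⟨u_F, x⟩ = 0` and `⟨u_F^w, x⟩ < 0`, then `⟨u_{F'}, x⟩ > 0`; by
reflexivity this value is an integer, and it is at most `1`, so `x ∈ F'`
(`Polytope.mem_neighborFacet`). As `F'` has `d` vertices, `d - 1` of which lie on `F`, the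
vertex `x ∉ F` is the neighboring vertex (`Polytope.IsNeighborFacet.unique`).

A suitable `w` exists because the coordinates of `x ≠ 0` in the basis `V(F)` add up to
`⟨u_F, x⟩ = 0` (`Polytope.exists_dualBasisElt_neg`), and the facet `N(F, w)` exists by tilting
`u_F` in the direction `-u_F^w` until a new vertex is reached
(`Polytope.exists_neighborFacet`).
-/

open Finset

/-! ### The pairing -/

/-- The functional `⟨u, ·⟩` as a linear map. -/
noncomputable def pairL {d : ℕ} (u : Fin d → ℝ) : (Fin d → ℝ) →ₗ[ℝ] ℝ where
  toFun := pairing u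
  map_add' x y := by simp [pairing, mul_add, Finset.sum_add_distrib]
  map_smul' r x := by
    simp only [pairing, Pi.smul_apply, smul_eq_mul, RingHom.id_apply, Finset.mul_sum]
    exact Finset.sum_congr rfl fun i _ => by ring

theorem pairL_apply {d : ℕ} (u x : Fin d → ℝ) : pairL u x = pairing u x := rfl

theorem exists_pairing {d : ℕ} (f : (Fin d → ℝ) →ₗ[ℝ] ℝ) :
    ∃ u : Fin d → ℝ, ∀ x, pairing u x = f x := by
  refine ⟨fun i => f (Pi.single i 1), fun x => ?_⟩
  conv_rhs => rw [pi_eq_sum_univ' x]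
  simp only [map_sum, map_smul, smul_eq_mul, pairing, mul_comm]

theorem pairing_self_pos {d : ℕ} {u : Fin d → ℝ} (hu : u ≠ 0) : 0 < pairing u u := by
  obtain ⟨i, hi⟩ := Function.ne_iff.1 hu
  exact Finset.sum_pos' (fun j _ => mul_self_nonneg _)
    ⟨i, Finset.mem_univ _, mul_self_pos.2 hi⟩

namespace Polytope

variable {d : ℕ}

theorem exists_smul_mem_carrier (P : Polytope d) (h0 : 0 ∈ interior P.carrier)
    (v : Fin d → ℝ) : ∃ t : ℝ, 0 < t ∧ t • v ∈ P.carrier := by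
  have hc : Filter.Tendsto (fun t : ℝ => t • v) (nhdsWithin 0 (Set.Ioi 0)) (nhds 0) := by
    have : Continuous fun t : ℝ => t • v := by fun_prop
    simpa using (this.tendsto 0).mono_left nhdsWithin_le_nhds
  have h1 := hc.eventually (mem_interior_iff_mem_nhds.1 h0)
  obtain ⟨t, ht, ht0⟩ := (h1.and self_mem_nhdsWithin).exists
  exact ⟨t, ht0, ht⟩

/-! ### Spanning and integrality for a facet -/

/-- A face is spanned by its vertices: in a convex combination of vertices of `P` attaining
the maximum `c` of `⟨u, ·⟩`, only vertices attaining `c` have nonzero weight. -/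
theorem mem_span_vertsOn (P : Polytope d) {u : Fin d → ℝ} {c : ℝ}
    (hle : ∀ x ∈ P.carrier, pairing u x ≤ c) {y : Fin d → ℝ} (hy : y ∈ P.carrier)
    (hyc : pairing u y = c) :
    y ∈ Submodule.span ℝ (P.vertsOn {x ∈ P.carrier | pairing u x = c}) := by
  obtain ⟨a, ha0, ha1, hay⟩ := Finset.mem_convexHull'.1 hy
  have hv : ∀ v ∈ P.verts, v ∈ P.carrier := fun v hv => subset_convexHull ℝ _ hv
  have hs : ∑ v ∈ P.verts, a v * (c - pairing u v) = 0 := by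
    have h1 : pairing u y = ∑ v ∈ P.verts, a v * pairing u v := by
      rw [← pairL_apply, ← hay]
      simp [pairL_apply]
    simp only [mul_sub, Finset.sum_sub_distrib, ← Finset.sum_mul, ha1, ← h1, hyc]
    ring
  have hz := (Finset.sum_eq_zero_iff_of_nonneg fun v h =>
    mul_nonneg (ha0 v h) (sub_nonneg.2 (hle v (hv v h)))).1 hs
  rw [← hay]
  refine Submodule.sum_mem _ fun v h => ?_
  rcases mul_eq_zero.1 (hz v h) with h1 | h1
  · simp [h1]
  · exact Submodule.smul_mem _ _ (Submodule.subset_span ⟨h, hv v h, by linarith⟩)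

/-- An affine subset of dimension `d - 1` missing the origin spans `ℝ^d` linearly. -/
theorem span_eq_top_of_finrank_vectorSpan {F : Set (Fin d → ℝ)} {u : Fin d → ℝ}
    (hu : ∀ x ∈ F, pairing u x = 1) (hne : F.Nonempty)
    (hdim : Module.finrank ℝ (vectorSpan ℝ F) = d - 1) : Submodule.span ℝ F = ⊤ := by
  obtain ⟨p, hp⟩ := hne
  have hle : vectorSpan ℝ F ≤ Submodule.span ℝ F := by
    refine Submodule.span_le.2 ?_
    rintro _ ⟨x, hx, y, hy, rfl⟩
    exact Submodule.sub_mem _ (Submodule.subset_span hx) (Submodule.subset_span hy)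
  have hker : vectorSpan ℝ F ≤ LinearMap.ker (pairL u) := by
    refine Submodule.span_le.2 ?_
    rintro _ ⟨x, hx, y, hy, rfl⟩
    simp only [vsub_eq_sub, SetLike.mem_coe, LinearMap.mem_ker, map_sub, pairL_apply, hu x hx,
      hu y hy, sub_self]
  have hlt : vectorSpan ℝ F < Submodule.span ℝ F := by
    refine lt_of_le_of_ne hle fun h => ?_
    have h1 : p ∈ LinearMap.ker (pairL u) := hker (h ▸ Submodule.subset_span hp)
    rw [LinearMap.mem_ker, pairL_apply, hu p hp] at h1
    exact one_ne_zero h1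
  have h2 := Submodule.finrank_lt_finrank_of_lt hlt
  apply Submodule.eq_top_of_finrank_eq
  have h3 := Submodule.finrank_le (Submodule.span ℝ F)
  rw [Module.finrank_fin_fun] at h3 ⊢
  omega

theorem pairing_eq_of_span {S : Set (Fin d → ℝ)} (hS : Submodule.span ℝ S = ⊤)
    {u v : Fin d → ℝ} (h : ∀ s ∈ S, pairing u s = pairing v s) (x : Fin d → ℝ) :
    pairing u x = pairing v x :=
  LinearMap.congr_fun (LinearMap.ext_on (f := pairL u) (g := pairL v) hS h) x

/-- The functional `u_F` is at most `1` on `P`, with equality exactly on `F`, and the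
vertices of `F` span `ℝ^d`. -/
theorem IsFacet.uF_props {P : Polytope d} (h0 : 0 ∈ interior P.carrier)
    {F : Set (Fin d → ℝ)} (hF : P.IsFacet F) {u : Fin d → ℝ} (hu : P.IsUF F u) :
    (∀ x ∈ P.carrier, pairing u x ≤ 1) ∧ F = {x ∈ P.carrier | pairing u x = 1} ∧
      Submodule.span ℝ (P.vertsOn F) = ⊤ := by
  obtain ⟨⟨v, hv0, c, hle, hFe⟩, hne, hdim⟩ := hF
  have hc : 0 < c := by
    obtain ⟨t, ht, htv⟩ := P.exists_smul_mem_carrier h0 v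
    have h1 := hle _ htv
    rw [← pairL_apply, map_smul, pairL_apply, smul_eq_mul] at h1
    exact lt_of_lt_of_le (mul_pos ht (pairing_self_pos hv0)) h1
  have hspan := span_eq_top_of_finrank_vectorSpan hu hne hdim
  have huv : ∀ x, pairing v x = c * pairing u x := by
    have h2 : pairL v = c • pairL u := by
      refine LinearMap.ext_on hspan fun x hx => ?_
      have h3 : pairing u x = 1 := hu x hx
      rw [hFe] at hx
      simp [pairL_apply, h3, hx.2]
    intro x
    exact LinearMap.congr_fun h2 x
  refine ⟨fun x hx => ?_, ?_, ?_⟩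
  · have := hle x hx
    rw [huv] at this
    nlinarith
  · rw [hFe]
    ext x
    simp only [Set.mem_ofPred_eq, huv, and_congr_right_iff]
    intro _
    rw [mul_eq_left₀ hc.ne']
  · rw [eq_top_iff, ← hspan, Submodule.span_le]
    intro x hx
    rw [hFe] at hx
    have := P.mem_span_vertsOn hle hx.1 hx.2
    rwa [← hFe] at this

/-- On vertices of a reflexive polytope, `u_F` takes integral values. -/
theorem IsReflexive.pairing_int {P : Polytope d} (hP : P.IsReflexive)
    {F : Set (Fin d → ℝ)} (hF : P.IsFacet F) {u : Fin d → ℝ} (hu : P.IsUF F u)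
    {x : Fin d → ℝ} (hx : x ∈ P.verts) : ∃ n : ℤ, pairing u x = n := by
  obtain ⟨hlat, h0, hfac⟩ := hP
  obtain ⟨m, hm⟩ := hfac F hF
  have h1 : pairing u x = pairing (fun i => (m i : ℝ)) x :=
    pairing_eq_of_span (hF.uF_props h0 hu).2.2
      (fun s hs => (hu s hs.2).trans (hm s hs.2).symm) x
  choose z hz using hlat x hx
  refine ⟨∑ i, m i * z i, ?_⟩
  rw [h1]
  simp [pairing, hz]

/-! ### The neighboring facet -/

/-- A vertex `x` with `⟨u_F, x⟩ = 0` and `⟨u_F^w, x⟩ < 0` lies on the neighboring facet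
`F' = N(F, w)`: the value `⟨u_{F'}, x⟩ = (⟨u_{F'}, w⟩ - 1) ⟨u_F^w, x⟩` is a positive integer
bounded by `1`. -/
theorem mem_neighborFacet {P : Polytope d} (hP : P.IsReflexive)
    {F : Set (Fin d → ℝ)} (hF : P.IsFacet F) {u : Fin d → ℝ} (hu : P.IsUF F u)
    {x : Fin d → ℝ} (hx : x ∈ P.verts) (hx0 : pairing u x = 0)
    {w uw : Fin d → ℝ} (hw : w ∈ P.vertsOn F) (huw : P.IsDualBasisElt F w uw)
    (hneg : pairing uw x < 0) {F' : Set (Fin d → ℝ)} (hF' : P.IsNeighborFacet F w F') :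
    x ∈ F' := by
  obtain ⟨hfac', hne, hsub⟩ := hF'
  obtain ⟨m, hm⟩ := hP.2.2 F' hfac'
  set u' : Fin d → ℝ := fun i => (m i : ℝ)
  obtain ⟨-, hFe, hspan⟩ := hF.uF_props hP.2.1 hu
  obtain ⟨hle', hFe', -⟩ := hfac'.uF_props hP.2.1 hm
  have hc : ∀ v ∈ P.verts, v ∈ P.carrier := fun v hv => subset_convexHull ℝ _ hv
  have key : ∀ z, pairing u' z = pairing u z + (pairing u' w - 1) * pairing uw z := by
    have : pairL u' = pairL u + (pairing u' w - 1) • pairL uw := by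
      refine LinearMap.ext_on hspan fun v hv => ?_
      simp only [LinearMap.add_apply, LinearMap.smul_apply, pairL_apply, smul_eq_mul,
        hu v hv.2]
      by_cases h : v = w
      · subst h
        rw [huw.1]
        ring
      · rw [huw.2 v hv h, hm v (hsub v hv h)]
        ring
    intro z
    simpa [pairL_apply] using LinearMap.congr_fun this z
  have hw1 : pairing u' w < 1 := by
    refine lt_of_le_of_ne (hle' w (hc w hw.1)) fun h => hne ?_
    rw [hFe, hFe']
    ext z
    simp [key z, h]
  have hpos : 0 < pairing u' x := by
    rw [key, hx0]
    nlinarith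
  have h1 := hle' x (hc x hx)
  obtain ⟨n, hn⟩ := hP.pairing_int hfac' hm hx
  rw [hFe']
  refine ⟨hc x hx, ?_⟩
  rw [hn] at hpos h1 ⊢
  have h2 : 0 < n := by exact_mod_cast hpos
  have h3 : n ≤ 1 := by exact_mod_cast h1
  have : n = 1 := by omega
  simp [this]

/-- Existence of the neighboring facet, by pivoting: the functional `u_F - t u_F^w` is `1` on
the vertices of `F` other than `w`, and the largest `t` for which it is at most `1` on `P`
defines a facet. A vertex with `⟨u_F^w, x⟩ < 0` ensures that such a largest `t` exists. -/
theorem exists_neighborFacet {P : Polytope d} (h0 : 0 ∈ interior P.carrier)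
    {F : Set (Fin d → ℝ)} (hF : P.IsFacet F) {u : Fin d → ℝ} (hu : P.IsUF F u)
    {x : Fin d → ℝ} (hx : x ∈ P.verts)
    {w uw : Fin d → ℝ} (huw : P.IsDualBasisElt F w uw)
    (hneg : pairing uw x < 0) : ∃ F', P.IsNeighborFacet F w F' := by
  obtain ⟨hle, hFe, hspan⟩ := hF.uF_props h0 hu
  have hc : ∀ v ∈ P.verts, v ∈ P.carrier := fun v hv => subset_convexHull ℝ _ hv
  obtain ⟨z, hz, hmin⟩ := Finset.exists_min_image (P.verts.filter fun z => pairing uw z < 0)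
    (fun z => (1 - pairing u z) / (-pairing uw z)) ⟨x, by simp [hx, hneg]⟩
  simp only [Finset.mem_filter] at hz hmin
  set t := (1 - pairing u z) / (-pairing uw z) with ht
  have ht0 : 0 ≤ t := div_nonneg (by linarith [hle z (hc z hz.1)]) (by linarith)
  obtain ⟨u', hu'⟩ := exists_pairing (pairL u - t • pairL uw)
  replace hu' : ∀ y, pairing u' y = pairing u y - t * pairing uw y := by
    intro y
    simpa [pairL_apply] using hu' y
  have hv' : ∀ v ∈ P.verts, pairing u' v ≤ 1 := by
    intro v hv
    rw [hu']
    by_cases h : pairing uw v < 0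
    · have := hmin v ⟨hv, h⟩
      rw [le_div_iff₀ (by linarith)] at this
      linarith
    · have := hle v (hc v hv)
      nlinarith
  have hle' : ∀ y ∈ P.carrier, pairing u' y ≤ 1 := fun y hy =>
    convexHull_min (s := (P.verts : Set (Fin d → ℝ))) (t := {y | pairL u' y ≤ 1}) hv'
      (convex_halfSpace_le (pairL u').isLinear 1) hy
  have hz1 : pairing u' z = 1 := by
    rw [hu', ht]
    have : pairing uw z ≠ 0 := hz.2.ne
    field_simp
    ring
  have hsub : ∀ v ∈ P.vertsOn F, v ≠ w → pairing u' v = 1 := by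
    intro v hv h
    rw [hu', huw.2 v hv h, hu v hv.2]
    ring
  have hzF : z ∉ F := by
    intro hzF
    by_cases h : z = w
    · rw [h, huw.1] at hz
      linarith
    · rw [huw.2 z ⟨hz.1, hzF⟩ h] at hz
      exact lt_irrefl _ hz.2
  set F' : Set (Fin d → ℝ) := {y ∈ P.carrier | pairing u' y = 1} with hF'
  have hzF' : z ∈ F' := ⟨hc z hz.1, hz1⟩
  have hu'0 : u' ≠ 0 := by
    rintro rfl
    simp [pairing] at hz1
  refine ⟨F', ⟨⟨u', hu'0, 1, hle', rfl⟩, ⟨z, hzF'⟩, ?_⟩, fun h => hzF (h ▸ hzF'),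
    fun v hv h => ⟨hc v hv.1, hsub v hv h⟩⟩
  -- The linear span of `F'` is everything: it contains `z` and `V(F) \ {w}`.
  have hspan' : Submodule.span ℝ F' = ⊤ := by
    by_contra hne
    obtain ⟨f, hf0, hf⟩ := Submodule.exists_le_ker_of_lt_top _ (lt_top_iff_ne_top.2 hne)
    have hfF : ∀ y ∈ F', f y = 0 := fun y hy => hf (Submodule.subset_span hy)
    have hfe : f = f w • pairL uw := by
      refine LinearMap.ext_on hspan fun v hv => ?_
      simp only [LinearMap.smul_apply, pairL_apply, smul_eq_mul]
      by_cases h : v = w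
      · rw [h, huw.1, mul_one]
      · rw [huw.2 v hv h, mul_zero, hfF v ⟨hc v hv.1, hsub v hv h⟩]
    have h1 : f w * pairing uw z = 0 := by
      rw [← hfF z hzF']
      conv_rhs => rw [hfe]
      simp [pairL_apply]
    have h2 : f w = 0 := (mul_eq_zero.1 h1).resolve_right hz.2.ne
    exact hf0 (by rw [hfe, h2, zero_smul])
  -- The vector span of `F'` lies in the kernel of `⟨u', ·⟩` and spans `ℝ^d` together with `z`,
  -- so it has dimension `d - 1`.
  have hker : vectorSpan ℝ F' ≤ LinearMap.ker (pairL u') := by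
    refine Submodule.span_le.2 ?_
    rintro _ ⟨a, ha, b, hb, rfl⟩
    simp only [vsub_eq_sub, SetLike.mem_coe, LinearMap.mem_ker, map_sub, pairL_apply, ha.2,
      hb.2, sub_self]
  have hsup : vectorSpan ℝ F' ⊔ Submodule.span ℝ {z} = ⊤ := by
    rw [eq_top_iff, ← hspan', Submodule.span_le]
    intro y hy
    have h1 : y - z ∈ vectorSpan ℝ F' := vsub_mem_vectorSpan ℝ hy hzF'
    have h2 := Submodule.add_mem_sup h1 (Submodule.mem_span_singleton_self (R := ℝ) z)
    simpa using h2
  have h1 := Submodule.finrank_add_le_finrank_add_finrank (vectorSpan ℝ F')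
    (Submodule.span ℝ {z})
  have h2 := finrank_span_singleton (K := ℝ) (v := z) (by rintro rfl; simp [pairing] at hz1)
  rw [hsup, finrank_top, Module.finrank_fin_fun, h2] at h1
  have h3 : Module.finrank ℝ (vectorSpan ℝ F') < d := by
    refine (Submodule.finrank_lt fun h => ?_).trans_eq (Module.finrank_fin_fun ℝ)
    have h4 : z ∈ LinearMap.ker (pairL u') := hker (h ▸ Submodule.mem_top)
    rw [LinearMap.mem_ker, pairL_apply, hz1] at h4
    exact one_ne_zero h4
  omega

/-! ### A negative coordinate, and uniqueness of the neighboring vertex -/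

theorem zero_notMem_verts {P : Polytope d} (h0 : 0 ∈ interior P.carrier)
    {v : Fin d → ℝ} (hv : v ∈ P.carrier) (hv0 : v ≠ 0) : (0 : Fin d → ℝ) ∉ P.verts := by
  intro h
  obtain ⟨t, ht, htv⟩ := P.exists_smul_mem_carrier h0 (-v)
  refine hv0 ((P.vertsExtreme 0 h).2 hv htv ?_)
  refine ⟨t / (1 + t), 1 / (1 + t), by positivity, by positivity, by field_simp; ring, ?_⟩
  rw [smul_smul, smul_neg, ← sub_eq_add_neg, ← sub_smul]
  convert zero_smul ℝ v using 2
  ring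

/-- A nonzero point of the hyperplane `⟨u_F, ·⟩ = 0` has a negative coordinate in the basis
`V(F)`, because its coordinates sum to zero. -/
theorem exists_dualBasisElt_neg {P : Polytope d}
    {F : Set (Fin d → ℝ)} (hcard : (P.vertsOn F).ncard = d)
    (hspan : Submodule.span ℝ (P.vertsOn F) = ⊤) {u : Fin d → ℝ} (hu : P.IsUF F u)
    {x : Fin d → ℝ} (hx : x ≠ 0) (hx0 : pairing u x = 0) :
    ∃ w ∈ P.vertsOn F, ∃ uw, P.IsDualBasisElt F w uw ∧ pairing uw x < 0 := by
  have hfin : (P.vertsOn F).Finite := P.verts.finite_toSet.subset fun v hv => hv.1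
  have := hfin.fintype
  have hcard' : Fintype.card (P.vertsOn F) = Module.finrank ℝ (Fin d → ℝ) := by
    rw [Module.finrank_fin_fun, ← Nat.card_eq_fintype_card, Nat.card_coe_set_eq, hcard]
  have hli : LinearIndependent ℝ (Subtype.val : P.vertsOn F → Fin d → ℝ) :=
    linearIndependent_of_top_le_span_of_card_eq_finrank (by simp [hspan]) hcard'
  let b := Module.Basis.mk hli (by simp [hspan])
  have hb : ∀ i, b i = i.1 := fun i => by simp [b]
  have hsum : ∑ i, b.repr x i = 0 := by
    rw [← hx0, ← pairL_apply]
    conv_rhs => rw [← b.sum_repr x]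
    simp [hb, pairL_apply, fun i : P.vertsOn F => hu i.1 i.2.2]
  have hex : ∃ i, b.repr x i < 0 := by
    by_contra! hnn
    have hz := (Finset.sum_eq_zero_iff_of_nonneg fun i _ => hnn i).1 hsum
    refine hx ?_
    rw [← b.sum_repr x]
    exact Finset.sum_eq_zero fun i hi => by rw [hz i hi, zero_smul]
  obtain ⟨i, hi⟩ := hex
  obtain ⟨uw, huw⟩ := exists_pairing (b.coord i)
  refine ⟨i.1, i.2, uw, ⟨?_, fun v hv hvi => ?_⟩, by rw [huw]; exact hi⟩
  · rw [huw, ← hb i]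
    simp
  · rw [huw, show v = b ⟨v, hv⟩ from (hb ⟨v, hv⟩).symm]
    have : (⟨v, hv⟩ : P.vertsOn F) ≠ i := fun h => hvi (congrArg Subtype.val h)
    simp [this]

/-- In a simplicial polytope, `N(F, w)` has only one vertex outside `F`. -/
theorem IsNeighborFacet.unique {P : Polytope d} (hsimp : P.IsSimplicial)
    {F : Set (Fin d → ℝ)} (hF : P.IsFacet F) {w : Fin d → ℝ}
    {F' : Set (Fin d → ℝ)} (hF' : P.IsNeighborFacet F w F') {x y : Fin d → ℝ}
    (hx : x ∈ P.vertsOn F') (hxF : x ∉ F) (hy : y ∈ P.vertsOn F') (hyF : y ∉ F) : x = y := by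
  by_contra hne
  have hfin : ∀ G, (P.vertsOn G).Finite :=
    fun G => P.verts.finite_toSet.subset fun v hv => hv.1
  have hsub : insert x (insert y (P.vertsOn F \ {w})) ⊆ P.vertsOn F' := by
    intro v hv
    rcases hv with rfl | rfl | ⟨hv, hvw⟩
    · exact hx
    · exact hy
    · exact ⟨hv.1, hF'.2.2 v hv hvw⟩
  have h1 := Set.ncard_le_ncard hsub (hfin F')
  have hfd : (P.vertsOn F \ {w}).Finite := (hfin F).sdiff
  rw [hsimp F' hF'.1, Set.ncard_insert_of_notMem _ (hfd.insert y),
    Set.ncard_insert_of_notMem (fun h => hyF h.1.2) hfd] at h1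
  · have h2 := Set.pred_ncard_le_ncard_sdiff_singleton (P.vertsOn F) w
    rw [hsimp F hF] at h2
    omega
  · rintro (h | h)
    · exact hne h
    · exact hxF h.1.2

end Polytope

/-- A vertex `x` of a simplicial reflexive polytope with `⟨u_F, x⟩ = 0` is a
neighboring vertex of `F`; more precisely, for every vertex `w` of `F` with
`⟨u_F^w, x⟩ < 0`, `x` equals the neighboring vertex `n(F, w)`. -/
theorem vertex_on_H0_is_neighbor {d : ℕ} (P : Polytope d) (hrefl : P.IsReflexive)
    (hsimp : P.IsSimplicial)
    (F : Set (Fin d → ℝ)) (hF : P.IsFacet F)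
    (uF : Fin d → ℝ) (huF : P.IsUF F uF)
    (x : Fin d → ℝ) (hx : x ∈ P.verts) (hx0 : pairing uF x = 0) :
    (∃ w ∈ P.vertsOn F, P.IsNeighborVertex F w x) ∧
    (∀ w ∈ P.vertsOn F, ∀ uFw : Fin d → ℝ, P.IsDualBasisElt F w uFw →
      pairing uFw x < 0 → ∀ y, P.IsNeighborVertex F w y → x = y) := by
  have h0 := hrefl.2.1
  obtain ⟨-, hFe, hspan⟩ := hF.uF_props h0 huF
  have hxF : x ∉ F := fun h => by
    have := huF x h
    rw [hx0] at this
    exact zero_ne_one this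
  refine ⟨?_, ?_⟩
  · obtain ⟨p, hp⟩ := hF.2.1
    have hp0 : p ≠ 0 := by
      rintro rfl
      have := huF _ hp
      simp [pairing] at this
    have hpc : p ∈ P.carrier := by
      rw [hFe] at hp
      exact hp.1
    have hxne : x ≠ 0 := by
      rintro rfl
      exact Polytope.zero_notMem_verts h0 hpc hp0 hx
    obtain ⟨w, hw, uw, huw, hneg⟩ :=
      Polytope.exists_dualBasisElt_neg (hsimp F hF) hspan huF hxne hx0
    obtain ⟨F', hF'⟩ := Polytope.exists_neighborFacet h0 hF huF hx huw hneg
    exact ⟨w, hw, F', hF',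
      ⟨hx, Polytope.mem_neighborFacet hrefl hF huF hx hx0 hw huw hneg hF'⟩, hxF⟩
  · rintro w hw uw huw hneg y ⟨F', hF', hy, hyF⟩
    exact hF'.unique hsimp hF
      ⟨hx, Polytope.mem_neighborFacet hrefl hF huF hx hx0 hw huw hneg hF'⟩ hxF hy hyF
end

section
/- Let P be a simplicial reflexive d-polytope and F a special facet of P. Then ⟨u_F, v⟩ ≥ -d for every vertex v of P. -/
/-!
Every vertex lying on `F` pairs with `u_F` to `1`. Since `u_F` is integral and `F` is cut out by
`⟨u_F, ·⟩ ≤ 1`, every other vertex pairs to an integer `< 1`, hence to something `≤ 0`. There are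
exactly `d` vertices on `F`, and `u_F` is the sum of the dual basis `u_F^w`, so specialness gives
`0 ≤ ⟨u_F, ν_P⟩ = d + ∑_{v ∉ F} ⟨u_F, v⟩`, where all the terms of the last sum are nonpositive.
Hence each of them is at least `-d`.

That `u_F` is the integral functional provided by reflexivity, and that it is proportional to the
functional cutting out `F`, follows from its uniqueness: the linear span of `F` is everything
(`span_facet_eq_top`). That the vertices on `F` form a basis follows because `F` lies in their
span (`facet_subset_span_verts`) and there are `d` of them.
-/


open Finset

namespace Polytope

variable {d : ℕ}

/-- The pairing with a fixed `u`, as a linear functional. -/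
noncomputable def pairingLin (u : Fin d → ℝ) : (Fin d → ℝ) →ₗ[ℝ] ℝ where
  toFun x := pairing u x
  map_add' x y := dotProduct_add u x y
  map_smul' a x := dotProduct_smul a u x

@[simp] lemma pairingLin_apply (u x : Fin d → ℝ) : pairingLin u x = pairing u x := rfl

lemma eq_of_pairing_eq {u w : Fin d → ℝ} (h : ∀ x, pairing u x = pairing w x) : u = w :=
  dotProduct_eq u w h

lemma exists_pairing_eq (φ : (Fin d → ℝ) →ₗ[ℝ] ℝ) : ∃ u, ∀ x, pairing u x = φ x := by
  refine ⟨fun i => φ (Pi.single i 1), fun x => ?_⟩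
  rw [LinearMap.pi_apply_eq_sum_univ φ x]
  simp only [pairing, smul_eq_mul]
  refine Finset.sum_congr rfl fun i _ => ?_
  rw [mul_comm]
  congr 2
  ext j
  simp [Pi.single_apply, eq_comm]

/-- `F` spans a hyperplane's worth of directions on which `u` vanishes, together with a point
where `u` equals `1`. -/
lemma span_facet_eq_top (hd : 0 < d) {F : Set (Fin d → ℝ)} {u : Fin d → ℝ}
    (hne : F.Nonempty) (hdim : Module.finrank ℝ (vectorSpan ℝ F) = d - 1)
    (hu : ∀ x ∈ F, pairing u x = 1) : Submodule.span ℝ F = ⊤ := by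
  obtain ⟨x₀, hx₀⟩ := hne
  have hsub : vectorSpan ℝ F ≤ Submodule.span ℝ F := by
    rw [vectorSpan_def, Submodule.span_le]
    rintro _ ⟨a, ha, b, hb, rfl⟩
    exact Submodule.sub_mem _ (Submodule.subset_span ha) (Submodule.subset_span hb)
  have hker : vectorSpan ℝ F ≤ LinearMap.ker (pairingLin u) := by
    rw [vectorSpan_def, Submodule.span_le]
    rintro _ ⟨a, ha, b, hb, rfl⟩
    have h : pairingLin u (a - b) = 0 := by
      rw [map_sub, pairingLin_apply, pairingLin_apply, hu a ha, hu b hb, sub_self]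
    exact h
  have hlt : vectorSpan ℝ F < Submodule.span ℝ F := by
    refine lt_of_le_of_ne hsub fun h => ?_
    have h0 : pairing u x₀ = 0 := hker (h ▸ Submodule.subset_span hx₀)
    rw [hu x₀ hx₀] at h0
    exact one_ne_zero h0
  have h1 := Submodule.finrank_lt_finrank_of_lt hlt
  have h2 := Submodule.finrank_le (Submodule.span ℝ F)
  rw [Module.finrank_fin_fun] at h2
  apply Submodule.eq_top_of_finrank_eq
  rw [Module.finrank_fin_fun]
  omega

lemma eq_of_eq_on_span_top {S : Set (Fin d → ℝ)} (hS : Submodule.span ℝ S = ⊤)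
    {u w : Fin d → ℝ} (h : ∀ x ∈ S, pairing u x = pairing w x) : u = w := by
  have : pairingLin u = pairingLin w := LinearMap.ext_on hS h
  exact eq_of_pairing_eq fun x => LinearMap.congr_fun this x

/-- In a convex combination of vertices attaining the maximum `1` of `u`, only vertices
attaining this maximum have nonzero weight. -/
lemma facet_subset_span_verts (P : Polytope d) {u : Fin d → ℝ}
    (hle : ∀ x ∈ P.carrier, pairing u x ≤ 1) {x : Fin d → ℝ} (hx : x ∈ P.carrier)
    (hx1 : pairing u x = 1) :
    x ∈ Submodule.span ℝ (P.vertsOn {x ∈ P.carrier | pairing u x = 1}) := by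
  have hx' := hx
  rw [carrier, Finset.mem_convexHull'] at hx'
  obtain ⟨w, hw0, hw1, hwx⟩ := hx'
  have hvc : ∀ v ∈ P.verts, v ∈ P.carrier := fun v hv => subset_convexHull ℝ _ hv
  have hsum : ∑ v ∈ P.verts, w v * (1 - pairing u v) = 0 := by
    have h : pairing u x = ∑ v ∈ P.verts, w v * pairing u v := by
      rw [← hwx, ← pairingLin_apply, map_sum]
      simp
    simp only [mul_sub, mul_one, Finset.sum_sub_distrib]
    rw [hw1, ← h, hx1, sub_self]
  have hz := (Finset.sum_eq_zero_iff_of_nonneg fun v hv =>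
    mul_nonneg (hw0 v hv) (sub_nonneg.2 (hle v (hvc v hv)))).1 hsum
  rw [← hwx]
  refine Submodule.sum_mem _ fun v hv => ?_
  rcases mul_eq_zero.1 (hz v hv) with h | h
  · rw [h, zero_smul]
    exact Submodule.zero_mem _
  · exact Submodule.smul_mem _ _ (Submodule.subset_span ⟨hv, hvc v hv, by linarith⟩)

/-- A nonzero functional is bounded on a neighbourhood of `0` only by positive constants. -/
lemma pos_of_pairing_le {S : Set (Fin d → ℝ)} (h0 : (0 : Fin d → ℝ) ∈ interior S)
    {w : Fin d → ℝ} (hw : w ≠ 0) {c : ℝ} (hle : ∀ x ∈ S, pairing w x ≤ c) : 0 < c := by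
  have hcont : Filter.Tendsto (fun t : ℝ => t • w) (nhdsWithin 0 (Set.Ioi 0)) (nhds 0) := by
    have : Continuous fun t : ℝ => t • w := by fun_prop
    have h := this.tendsto 0
    rw [zero_smul] at h
    exact h.mono_left nhdsWithin_le_nhds
  have hmem := hcont.eventually (mem_interior_iff_mem_nhds.1 h0)
  obtain ⟨t, htS, ht⟩ := (hmem.and self_mem_nhdsWithin).exists
  have hww : 0 < pairing w w := by
    refine lt_of_le_of_ne (Finset.sum_nonneg fun i _ => mul_self_nonneg _) fun h => hw ?_
    exact dotProduct_self_eq_zero.1 h.symm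
  have h := hle _ htS
  rw [← pairingLin_apply, map_smul, pairingLin_apply, smul_eq_mul] at h
  exact lt_of_lt_of_le (mul_pos ht hww) h

/-- If the `d` vertices on `F` span, then `u_F` is the sum of the dual basis, so specialness makes
its pairing with the vertex sum nonnegative. -/
lemma special_pairing_nonneg (P : Polytope d) {F : Set (Fin d → ℝ)} (hF : P.IsSpecialFacet F)
    (hcard : (P.vertsOn F).ncard = d) (hspan : Submodule.span ℝ (P.vertsOn F) = ⊤)
    {uF : Fin d → ℝ} (huF : P.IsUF F uF) : 0 ≤ pairing uF (∑ v ∈ P.verts, v) := by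
  have hfin : (P.vertsOn F).Finite := P.verts.finite_toSet.subset fun v hv => hv.1
  have : Fintype (P.vertsOn F) := hfin.fintype
  have hcard' : Fintype.card (P.vertsOn F) = Module.finrank ℝ (Fin d → ℝ) := by
    rw [Module.finrank_fin_fun, ← Nat.card_eq_fintype_card]
    exact hcard
  have hspan' : ⊤ ≤ Submodule.span ℝ (Set.range ((↑) : P.vertsOn F → Fin d → ℝ)) := by
    rw [Subtype.range_coe, hspan]
  let b := basisOfTopLeSpanOfCardEqFinrank ((↑) : P.vertsOn F → Fin d → ℝ) hspan' hcard'
  have hb : ∀ w, b w = w := fun w => by simp [b]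
  have key : ∀ x, pairing uF x = ∑ w, b.coord w x := by
    intro x
    have : pairingLin uF = ∑ w, b.coord w := by
      refine b.ext fun w => ?_
      rw [pairingLin_apply, hb, huF _ w.2.2]
      classical
      rw [← hb w]
      simp [Finsupp.single_apply]
    have h := LinearMap.congr_fun this x
    simpa using h
  rw [key]
  refine Finset.sum_nonneg fun w _ => ?_
  obtain ⟨u, hu⟩ := exists_pairing_eq (b.coord w)
  rw [← hu]
  refine hF.2 w w.2 u ⟨?_, fun v hv hvw => ?_⟩
  · rw [hu]
    rw [← hb w]
    simp
  · rw [hu, show v = b ⟨v, hv⟩ from (hb ⟨v, hv⟩).symm, Module.Basis.coord_apply,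
      Module.Basis.repr_self, Finsupp.single_apply, if_neg]
    exact fun h => hvw (congrArg Subtype.val h)

end Polytope

/-- If `F` is a special facet of a simplicial reflexive `d`-polytope `P`, then
`⟨u_F, v⟩ ≥ -d` for every vertex `v` of `P`. -/
theorem special_facet_pairing_ge_neg_d {d : ℕ} (P : Polytope d)
    (hrefl : P.IsReflexive) (hsimp : P.IsSimplicial)
    (F : Set (Fin d → ℝ)) (hF : P.IsSpecialFacet F)
    (uF : Fin d → ℝ) (huF : P.IsUF F uF) :
    ∀ v ∈ P.verts, -(d : ℝ) ≤ pairing uF v := by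
  obtain ⟨hlat, h0, hint⟩ := hrefl
  have hfacet := hF.1
  obtain ⟨⟨w, hw, c, hwc, hFw⟩, hne, hdim⟩ := hfacet
  -- A functional `w ≠ 0` cutting out a face exists only when `d > 0`.
  have hd : 0 < d := by
    rcases Nat.eq_zero_or_pos d with rfl | h
    · exact absurd (Subsingleton.elim w 0) hw
    · exact h
  have hc : 0 < c := Polytope.pos_of_pairing_le h0 hw hwc
  have htop := Polytope.span_facet_eq_top hd hne hdim huF
  obtain ⟨z, hz⟩ := hint F hF.1
  have hzu : uF = fun i => (z i : ℝ) :=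
    Polytope.eq_of_eq_on_span_top htop fun x hx => by rw [huF x hx, hz x hx]
  have hscale : ∀ x, pairing (c⁻¹ • w) x = c⁻¹ * pairing w x := fun x =>
    smul_dotProduct c⁻¹ w x
  have hwu : uF = c⁻¹ • w := Polytope.eq_of_eq_on_span_top htop fun x hx => by
    have hxw : pairing w x = c := by
      rw [hFw] at hx
      exact hx.2
    rw [huF x hx, hscale, hxw, inv_mul_cancel₀ hc.ne']
  have hle : ∀ x ∈ P.carrier, pairing uF x ≤ 1 := fun x hx => by
    rw [hwu, hscale, inv_mul_le_iff₀ hc, mul_one]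
    exact hwc x hx
  have hFu : F = {x ∈ P.carrier | pairing uF x = 1} := by
    rw [hFw]
    ext x
    refine and_congr_right fun _ => ?_
    rw [hwu, hscale, inv_mul_eq_one₀ hc.ne', eq_comm]
  have hspan : Submodule.span ℝ (P.vertsOn F) = ⊤ := by
    rw [eq_top_iff, ← htop, Submodule.span_le]
    intro x hx
    rw [hFu] at hx ⊢
    exact P.facet_subset_span_verts hle hx.1 hx.2
  have hcard := hsimp F hF.1
  have hnonneg := P.special_pairing_nonneg hF hcard hspan huF
  -- Off `F` the pairing is an integer smaller than `1`.
  have hoff : ∀ v ∈ P.verts, v ∉ F → pairing uF v ≤ 0 := by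
    intro v hv hvF
    have hvc : v ∈ P.carrier := subset_convexHull ℝ _ hv
    have hlt : pairing uF v < 1 := lt_of_le_of_ne (hle v hvc) fun h => hvF (by
      rw [hFu]
      exact ⟨hvc, h⟩)
    choose a ha using hlat v hv
    have hcast : pairing uF v = ((∑ i, z i * a i : ℤ) : ℝ) := by
      rw [hzu]
      simp [pairing, ha]
    rw [hcast] at hlt ⊢
    have : (∑ i, z i * a i : ℤ) < 1 := by exact_mod_cast hlt
    have h' : (∑ i, z i * a i : ℤ) ≤ 0 := by omega
    exact_mod_cast h'
  intro v hv
  by_cases hvF : v ∈ F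
  · rw [huF v hvF]
    have : (0 : ℝ) ≤ d := Nat.cast_nonneg d
    linarith
  classical
  have hsum : pairing uF (∑ v ∈ P.verts, v) = ∑ v ∈ P.verts, pairing uF v :=
    map_sum (Polytope.pairingLin uF) _ _
  rw [hsum, ← Finset.sum_filter_add_sum_filter_not P.verts (· ∈ F)] at hnonneg
  have hon : ∑ v ∈ P.verts with v ∈ F, pairing uF v = d := by
    have hset : ((P.verts.filter (· ∈ F) : Finset _) : Set (Fin d → ℝ)) = P.vertsOn F := by
      ext x
      simp [Polytope.vertsOn]
    rw [Finset.sum_congr rfl fun x hx => huF x (Finset.mem_filter.1 hx).2, Finset.sum_const,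
      nsmul_eq_mul, mul_one, ← Set.ncard_coe_finset, hset, hcard]
  -- All terms off `F` being nonpositive, their sum is at most the single term at `v`.
  have hone : ∑ x ∈ P.verts with x ∉ F, pairing uF x ≤ pairing uF v := by
    rw [← Finset.add_sum_erase _ _ (Finset.mem_filter.2 ⟨hv, hvF⟩)]
    have : ∑ x ∈ (P.verts.filter (· ∉ F)).erase v, pairing uF x ≤ 0 :=
      Finset.sum_nonpos fun x hx => by
        have hx' := Finset.mem_filter.1 (Finset.mem_of_mem_erase hx)
        exact hoff x hx'.1 hx'.2
    linarith
  linarith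
end

section
/- Let P be a simplicial reflexive d-polytope and F a facet of P. Suppose there are at least d-1 distinct vertices v_1, ..., v_{d-1} of F such that for each i, the neighboring vertex n(F, v_i) satisfies ⟨u_F, n(F,v_i)⟩ = 0 and ⟨u_F^{v_i}, n(F,v_i)⟩ = -1. Then the vertex set V(F) is a basis of the lattice N. -/
/-!
The supporting functional of the neighbouring facet `F' = N(F, v)` agrees with `u_F` on every vertex
of `F` other than `v`, so `u_{F'} = u_F + c • u_F^v` with `c = ⟨u_{F'}, v⟩ - 1`. Evaluating at
`y = n(F, v)`, where `⟨u_{F'}, y⟩ = 1`, `⟨u_F, y⟩ = 0` and `⟨u_F^v, y⟩ = -1`, gives `c = -1`, that is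
`u_F^v = u_F - u_{F'}` (`dualElt_eq_sub`). By reflexivity this is integral on the lattice. Hence, in
the expansion of a lattice point in the vertices of `F`, the coordinates at `v_1, …, v_{d-1}` are
integers, and so is the remaining one, because the coordinates add up to the integer `⟨u_F, x⟩`.

That the `d` vertices of `F` are linearly independent needs no convex geometry: the functionals
`u_F^{v_1}, …, u_F^{v_{d-1}}` kill the coefficients at the `v_i` in a linear relation, and `u_F` kills
the last one (`linearIndependent_of_dualElts`).
-/

open Finset

section Pairing

variable {d : ℕ}

lemma pairing_sum_smul {ι : Type*} [Fintype ι] (u : Fin d → ℝ) (a : ι → ℝ)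
    (b : ι → Fin d → ℝ) :
    pairing u (∑ i, a i • b i) = ∑ i, a i * pairing u (b i) := by
  change u ⬝ᵥ _ = ∑ i, a i * (u ⬝ᵥ b i)
  simp [dotProduct_sum, dotProduct_smul]

lemma exists_int_pairing (u : Fin d → ℤ) {x : Fin d → ℝ} (hx : IsLatticePt x) :
    ∃ z : ℤ, pairing (fun i => (u i : ℝ)) x = z := by
  choose z hz using hx
  exact ⟨∑ i, u i * z i, by simp [pairing, hz]⟩

lemma isLatticePt_sum_smul {ι : Type*} [Fintype ι] (a : ι → ℤ) {b : ι → Fin d → ℝ}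
    (hb : ∀ i, IsLatticePt (b i)) : IsLatticePt (∑ i, (a i : ℝ) • b i) := by
  intro j
  choose z hz using fun i => hb i j
  exact ⟨∑ i, a i * z i, by simp [Finset.sum_apply, hz]⟩

end Pairing

/-- A vector family with dual functionals at all indices but `0`, and a functional equal to `1` on
the whole family, is linearly independent. -/
lemma linearIndependent_of_dualElts {d n : ℕ} {b : Fin (n + 1) → Fin d → ℝ} {u : Fin d → ℝ}
    (hu : ∀ i, pairing u (b i) = 1) {U : Fin n → Fin d → ℝ}
    (hU : ∀ i j, pairing (U i) (b j) = if j = i.succ then 1 else 0) :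
    LinearIndependent ℝ b := by
  rw [Fintype.linearIndependent_iff]
  intro a ha
  have hzero (w : Fin d → ℝ) : ∑ i, a i * pairing w (b i) = 0 := by
    rw [← pairing_sum_smul, ha]
    simp [pairing]
  have hsucc (i : Fin n) : a i.succ = 0 := by simpa [hU] using hzero (U i)
  have h0 : a 0 = 0 := by simpa [hu, Fin.sum_univ_succ, hsucc] using hzero u
  exact Fin.cases h0 hsucc

/-- The relation `u_F^v = u_F - u_{F'}`, for a basis `b` with dual functional `U` at the index `k`,
where `u'` agrees with `u` on all basis vectors but `b k`. -/
lemma dualElt_eq_sub {d : ℕ} {ι : Type*} [Fintype ι] [DecidableEq ι] {b : ι → Fin d → ℝ}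
    (hspan : ∀ x, ∃ a : ι → ℝ, x = ∑ i, a i • b i)
    {u u' U y : Fin d → ℝ} {k : ι} (hu : ∀ i, pairing u (b i) = 1)
    (hu' : ∀ i, i ≠ k → pairing u' (b i) = 1)
    (hU : ∀ i, pairing U (b i) = if i = k then 1 else 0)
    (huy : pairing u y = 0) (hu'y : pairing u' y = 1) (hUy : pairing U y = -1)
    (x : Fin d → ℝ) : pairing U x = pairing u x - pairing u' x := by
  have key (x : Fin d → ℝ) :
      pairing u' x = pairing u x + (pairing u' (b k) - 1) * pairing U x := by
    obtain ⟨a, rfl⟩ := hspan x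
    simp only [pairing_sum_smul, Finset.mul_sum, ← Finset.sum_add_distrib]
    refine Finset.sum_congr rfl fun i _ => ?_
    by_cases hik : i = k
    · subst hik
      simp only [hu, hU, if_true]
      ring
    · simp [hu, hU, hu' i hik, hik]
  have hc := key y
  rw [huy, hu'y, hUy] at hc
  rw [key x, show pairing u' (b k) - 1 = -1 by linarith]
  ring

/-- Lemma (`lemma2`): if a facet `F` of a simplicial reflexive `d`-polytope has at
least `d - 1` distinct vertices `v_1, …, v_{d-1}` such that `n(F, v_i)` lies in
`H(F, 0)` and `⟨u_F^{v_i}, n(F, v_i)⟩ = -1`, then `V(F)` is a basis of the lattice. -/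
theorem vertsOn_facet_basis_of_neighbors {d : ℕ} (P : Polytope d)
    (hrefl : P.IsReflexive) (hsimp : P.IsSimplicial)
    (F : Set (Fin d → ℝ)) (hF : P.IsFacet F)
    (uF : Fin d → ℝ) (huF : P.IsUF F uF)
    (v : Fin (d - 1) → (Fin d → ℝ)) (hinj : Function.Injective v)
    (hvF : ∀ i, v i ∈ P.vertsOn F)
    (hneigh : ∀ i, ∃ y, P.IsNeighborVertex F (v i) y ∧ pairing uF y = 0 ∧
      ∃ uFv : Fin d → ℝ, P.IsDualBasisElt F (v i) uFv ∧ pairing uFv y = -1) :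
    IsLatticeBasis (P.vertsOn F) := by
  obtain _ | n := d
  · -- In dimension `0` there is no nonzero functional, hence no facet.
    obtain ⟨⟨u, hu, -⟩, -⟩ := hF
    exact absurd (Subsingleton.elim u 0) hu
  change Fin n → _ at v
  change ∀ i : Fin n, _ at hvF hneigh
  have hcard : (P.vertsOn F).ncard = n + 1 := hsimp F hF
  have hfin : (P.vertsOn F).Finite := Set.finite_of_ncard_pos (by omega)
  have hsub : Set.range v ⊆ P.vertsOn F := Set.range_subset_iff.2 hvF
  have hcardv : (Set.range v).ncard = n := by
    rw [← Set.image_univ, Set.ncard_image_of_injective _ hinj, Set.ncard_univ, Nat.card_fin,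
      Nat.add_sub_cancel]
  obtain ⟨w, hwF, hwv⟩ : ∃ w ∈ P.vertsOn F, w ∉ Set.range v :=
    Set.exists_mem_notMem_of_ncard_lt_ncard (by omega) (Set.toFinite _)
  let b : Fin (n + 1) → Fin (n + 1) → ℝ := Fin.cons w v
  have hb : Function.Injective b := Fin.cons_injective_iff.2 ⟨hwv, hinj⟩
  have hrange : Set.range b = P.vertsOn F := by
    refine Set.eq_of_subset_of_ncard_le (Set.range_subset_iff.2 (Fin.cases hwF hvF)) ?_ hfin
    rw [← Set.image_univ, Set.ncard_image_of_injective _ hb, Set.ncard_univ, Nat.card_fin, hcard]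
  have hbF (i : Fin (n + 1)) : b i ∈ P.vertsOn F := hrange ▸ Set.mem_range_self i
  choose y hy huy U hU hUy using hneigh
  choose F' hF' hyF' hyF using hy
  have hUb (i : Fin n) (j : Fin (n + 1)) :
      pairing (U i) (b j) = if j = i.succ then 1 else 0 := by
    split_ifs with h
    · subst h
      exact (hU i).1
    · exact (hU i).2 _ (hbF j) fun hj => h (hb hj)
  have hub (i : Fin (n + 1)) : pairing uF (b i) = 1 := huF _ (hbF i).2
  have hli : LinearIndependent ℝ b := linearIndependent_of_dualElts hub hUb
  have hspan (x : Fin (n + 1) → ℝ) : ∃ a : Fin (n + 1) → ℝ, x = ∑ i, a i • b i := by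
    let B := basisOfLinearIndependentOfCardEqFinrank hli (by simp)
    exact ⟨B.repr x, by simpa [B] using (B.sum_repr x).symm⟩
  obtain ⟨z, hz⟩ := hrefl.2.2 F hF
  choose z' hz' using fun i => hrefl.2.2 (F' i) (hF' i).1
  -- `u_F` is the integral functional provided by reflexivity, since both are `1` on a basis.
  have huz (x : Fin (n + 1) → ℝ) : pairing uF x = pairing (fun i => (z i : ℝ)) x := by
    obtain ⟨a, rfl⟩ := hspan x
    simp only [pairing_sum_smul, hub, hz _ (hbF _).2]
  have hdual (i : Fin n) (x : Fin (n + 1) → ℝ) :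
      pairing (U i) x = pairing uF x - pairing (fun j => (z' i j : ℝ)) x :=
    dualElt_eq_sub hspan hub
      (fun j hj => hz' i _ ((hF' i).2.2 _ (hbF j) fun h => hj (hb (show b j = b i.succ from h))))
      (hUb i) (huy i) (hz' i _ (hyF' i).2) (hUy i) x
  refine ⟨b, hrange, fun x => ⟨fun hx => ?_, ?_⟩⟩
  · obtain ⟨a, ha⟩ := hspan x
    obtain ⟨m, hm⟩ := exists_int_pairing z hx
    choose m' hm' using fun i => exists_int_pairing (z' i) hx
    have hsucc (i : Fin n) : a i.succ = ((m - m' i : ℤ) : ℝ) := by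
      have hcoord : pairing (U i) x = a i.succ := by simp [ha, pairing_sum_smul, hUb]
      rw [← hcoord, hdual, huz, hm, hm']
      push_cast
      rfl
    have hsum : ∑ i, a i = m := by
      rw [← hm, ← huz, ha, pairing_sum_smul]
      simp [hub]
    have h0 : a 0 = ((m - ∑ i, (m - m' i) : ℤ) : ℝ) := by
      rw [Fin.sum_univ_succ, Finset.sum_congr rfl fun i _ => hsucc i, ← Int.cast_sum] at hsum
      rw [Int.cast_sub]
      linarith
    have hint : ∀ i, ∃ k : ℤ, a i = k := Fin.cases ⟨_, h0⟩ fun i => ⟨_, hsucc i⟩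
    choose k hk using hint
    exact ⟨k, by simpa only [hk] using ha⟩
  · rintro ⟨a, rfl⟩
    exact isLatticePt_sum_smul a fun i => hrefl.1 _ (hbF i).1
end

section
/- Let P be a simplicial reflexive d-polytope, F a facet of P, and v_1, v_2 distinct vertices of F. Set y_1 = n(F, v_1) and y_2 = n(F, v_2), and suppose y_1 ≠ y_2, ⟨u_F, y_1⟩ = ⟨u_F, y_2⟩ = 0, and ⟨u_F^{v_1}, y_1⟩ = ⟨u_F^{v_2}, y_2⟩ = -1. Then there is no vertex x of P with ⟨u_F, x⟩ = -1 and ⟨u_F^{v_1}, x⟩ = ⟨u_F^{v_2}, x⟩ = -1. -/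
/-! Write `a = ⟨u_F^{v₂}, y₁⟩` and `b = ⟨u_F^{v₁}, y₂⟩`. Since `⟨u_F, yᵢ⟩ = 0` and
`⟨u_F^{vᵢ}, yᵢ⟩ = -1`, the facet `Fᵢ = N(F, vᵢ)` has functional `u_F - u_F^{vᵢ}`
(`neighbor_functional`). Its value at the other neighboring vertex is an integer which is at
most `1`, and it is not `1`, because `y₁ ≠ y₂` and a facet containing `V(F) \ {vᵢ}`
has at most one vertex outside `F` (`eq_of_not_mem`). Hence `a, b ≥ 0`.

Rotate `F₁` about its ridge opposite `v₂`. The element of the basis dual to `V(F₁)` belonging to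
`v₂` is `g = u_F^{v₂} + a u_F^{v₁}`, so the facet reached has functional `u_F - u_F^{v₁} - s g`,
and `s > 0` is an integer by reflexivity (`exists_rotation`). A vertex `x` as in the theorem has
value `s (1 + a) ≤ 1` under it, which forces `s = 1`, `a = 0`, and `x` lies on this facet, with
functional `u_F - u_F^{v₁} - u_F^{v₂}` (`rotated_facet`). Exchanging the indices gives `b = 0`,
so `y₂` lies on that facet as well. It then contains `V(F₁) \ {v₂}` and the two vertices `x` and
`y₂` outside `F₁`, one vertex too many for a simplicial polytope.

Throughout, linear independence is used in its dual form `Spanning`: a functional vanishing on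
the set is zero. -/


open Finset

/-! ### The pairing and spanning sets -/

section PairingAlgebra

variable {d : ℕ}

lemma pairing_add_left (u v x : Fin d → ℝ) : pairing (u + v) x = pairing u x + pairing v x :=
  add_dotProduct u v x

lemma pairing_sub_left (u v x : Fin d → ℝ) : pairing (u - v) x = pairing u x - pairing v x :=
  sub_dotProduct u v x

lemma pairing_smul_left (c : ℝ) (u x : Fin d → ℝ) : pairing (c • u) x = c * pairing u x :=
  smul_dotProduct c u x

lemma pairing_zero_left (x : Fin d → ℝ) : pairing 0 x = 0 := zero_dotProduct x

lemma pairing_zero_right (u : Fin d → ℝ) : pairing u 0 = 0 := dotProduct_zero u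

/-- `pairing u` as a linear functional. -/
noncomputable def pairingL (u : Fin d → ℝ) : (Fin d → ℝ) →ₗ[ℝ] ℝ := dotProductEquiv ℝ (Fin d) u

lemma pairingL_apply (u x : Fin d → ℝ) : pairingL u x = pairing u x := rfl

/-- An integral functional takes integer values on lattice points. -/
lemma pairing_int {u : Fin d → ℤ} {x : Fin d → ℝ} (hx : IsLatticePt x) :
    ∃ z : ℤ, pairing (fun i => (u i : ℝ)) x = z := by
  choose f hf using hx
  exact ⟨∑ i, u i * f i, by simp [pairing, hf]⟩

/-- `S` spans `ℝ^d`, expressed dually: only the zero functional vanishes on `S`. -/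
def Spanning (S : Set (Fin d → ℝ)) : Prop :=
  ∀ L : Fin d → ℝ, (∀ z ∈ S, pairing L z = 0) → L = 0

lemma Spanning.ext {S : Set (Fin d → ℝ)} (hS : Spanning S) {u v : Fin d → ℝ}
    (h : ∀ z ∈ S, pairing u z = pairing v z) : u = v := by
  refine sub_eq_zero.1 (hS _ fun z hz => ?_)
  rw [pairing_sub_left, h z hz, sub_self]

lemma spanning_of_span_eq_top {S : Set (Fin d → ℝ)} (hS : Submodule.span ℝ S = ⊤) :
    Spanning S := by
  intro L hL
  have h : pairingL L = 0 := LinearMap.ext_on hS (fun z hz => hL z hz)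
  exact (dotProductEquiv ℝ (Fin d)).map_eq_zero_iff.1 h

lemma Spanning.span_eq_top {S : Set (Fin d → ℝ)} (hS : Spanning S) :
    Submodule.span ℝ S = ⊤ := by
  by_contra hne
  obtain ⟨f, hf, hle⟩ := Submodule.exists_le_ker_of_lt_top _ (lt_top_iff_ne_top.2 hne)
  apply hf
  obtain ⟨L, rfl⟩ := (dotProductEquiv ℝ (Fin d)).surjective f
  rw [hS L fun z hz => hle (Submodule.subset_span hz), map_zero]

lemma span_le_vectorSpan_sup {S : Set (Fin d → ℝ)} {p : Fin d → ℝ} (hp : p ∈ S) :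
    Submodule.span ℝ S ≤ vectorSpan ℝ S ⊔ Submodule.span ℝ {p} := by
  rw [Submodule.span_le]
  intro z hz
  have h := Submodule.add_mem_sup (vsub_mem_vectorSpan ℝ hz hp)
    (Submodule.mem_span_singleton_self (R := ℝ) p)
  simpa using h

/-- A functional constant on `S` vanishes on the direction of `S`. -/
lemma vectorSpan_le_ker {S : Set (Fin d → ℝ)} {u : Fin d → ℝ} {c : ℝ}
    (h : ∀ z ∈ S, pairing u z = c) : vectorSpan ℝ S ≤ LinearMap.ker (pairingL u) := by
  rw [vectorSpan_def, Submodule.span_le]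
  rintro _ ⟨a, ha, b, hb, rfl⟩
  have e : pairingL u (a - b) = 0 := by
    rw [map_sub, pairingL_apply, pairingL_apply, h a ha, h b hb, sub_self]
  exact e

end PairingAlgebra

/-! ### Facets and their functionals -/

namespace Polytope

variable {d : ℕ} {P : Polytope d}

lemma le_of_verts {u : Fin d → ℝ} {c : ℝ} (h : ∀ z ∈ P.verts, pairing u z ≤ c) :
    ∀ z ∈ P.carrier, pairing u z ≤ c :=
  convexHull_min (fun z hz => h z hz) (convex_halfSpace_le (pairingL u).isLinear c)

lemma vert_mem {v : Fin d → ℝ} (hv : v ∈ P.verts) : v ∈ P.carrier := subset_convexHull ℝ _ hv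

/-- A linear functional vanishing on the vertices of a face vanishes on the face. -/
lemma vanish_on_face {F : Set (Fin d → ℝ)} (hF : P.IsFace F) {L : Fin d → ℝ}
    (hL : ∀ z ∈ P.vertsOn F, pairing L z = 0) : ∀ z ∈ F, pairing L z = 0 := by
  obtain ⟨u, -, c, hle, rfl⟩ := hF
  rintro x ⟨hx, hxc⟩
  obtain ⟨w, hw0, hw1, rfl⟩ := Finset.mem_convexHull'.1 hx
  rw [← pairingL_apply, map_sum] at hxc ⊢
  simp only [map_smul, smul_eq_mul, pairingL_apply] at hxc ⊢
  -- the nonnegative slacks `w z * (c - ⟨u, z⟩)` sum to zero, so each of them is zero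
  have hs : ∑ z ∈ P.verts, w z * (c - pairing u z) = 0 := by
    simp only [mul_sub, Finset.sum_sub_distrib, ← Finset.sum_mul, hw1, hxc]
    ring
  have h0 := (Finset.sum_eq_zero_iff_of_nonneg fun z hz =>
    mul_nonneg (hw0 z hz) (sub_nonneg.2 (hle z (vert_mem hz)))).1 hs
  refine Finset.sum_eq_zero fun z hz => ?_
  rcases mul_eq_zero.1 (h0 z hz) with h | h
  · rw [h, zero_mul]
  · rw [hL z ⟨hz, vert_mem hz, (sub_eq_zero.1 h).symm⟩, mul_zero]

/-- The vertices of a facet whose hyperplane misses the origin span `ℝ^d`. -/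
lemma IsFacet.spanning {F : Set (Fin d → ℝ)} (hF : P.IsFacet F) {uF : Fin d → ℝ}
    (huF : P.IsUF F uF) : Spanning (P.vertsOn F) := by
  obtain ⟨hface, ⟨p, hp⟩, hrank⟩ := hF
  intro L hL
  refine spanning_of_span_eq_top (S := F) ?_ L (vanish_on_face hface hL)
  have hlt : vectorSpan ℝ F < Submodule.span ℝ F := by
    refine lt_of_le_of_ne ?_ fun heq => ?_
    · rw [vectorSpan_def, Submodule.span_le]
      rintro _ ⟨a, ha, b, hb, rfl⟩
      exact sub_mem (Submodule.subset_span ha) (Submodule.subset_span hb)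
    · have hmem : p ∈ vectorSpan ℝ F := heq ▸ Submodule.subset_span hp
      have h0 : pairing uF p = 0 := vectorSpan_le_ker huF hmem
      linarith [huF p hp]
  have h := Submodule.finrank_lt_finrank_of_lt hlt
  apply Submodule.eq_top_of_finrank_eq
  have h' := Submodule.finrank_le (Submodule.span ℝ F)
  rw [Module.finrank_fin_fun] at h' ⊢
  omega

/-- `u_F` defines `F`: it is at most `1` on `P`, with equality exactly on `F`. -/
lemma IsFacet.uF_spec (h0 : (0 : Fin d → ℝ) ∈ P.carrier) {F : Set (Fin d → ℝ)}
    (hF : P.IsFacet F) {uF : Fin d → ℝ} (huF : P.IsUF F uF) :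
    (∀ x ∈ P.carrier, pairing uF x ≤ 1) ∧ ∀ x ∈ P.carrier, pairing uF x = 1 → x ∈ F := by
  have hsp := hF.spanning huF
  obtain ⟨⟨u, hu, c, hle, rfl⟩, -, -⟩ := hF
  have huc : u = c • uF := by
    refine hsp.ext fun z hz => ?_
    rw [pairing_smul_left, huF z hz.2, hz.2.2, mul_one]
  have hc : 0 < c := by
    have h1 := hle 0 h0
    rw [pairing_zero_right] at h1
    refine lt_of_le_of_ne h1 fun h => hu ?_
    rw [huc, ← h, zero_smul]
  refine ⟨fun x hx => ?_, fun x hx h1 => ⟨hx, ?_⟩⟩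
  · have h := hle x hx
    rw [huc, pairing_smul_left] at h
    by_contra! hlt
    nlinarith
  · rw [huc, pairing_smul_left, h1, mul_one]

/-- A functional bounded by `1` on the vertices, with value `1` on a spanning set of vertices,
cuts out a facet. -/
lemma isFacet_of_spanning {w : Fin d → ℝ} (hw : ∀ z ∈ P.verts, pairing w z ≤ 1)
    {S : Set (Fin d → ℝ)} (hS : S ⊆ P.verts) (hS1 : ∀ z ∈ S, pairing w z = 1)
    (hsp : Spanning S) {p : Fin d → ℝ} (hp : p ∈ S) :
    P.IsFacet {z ∈ P.carrier | pairing w z = 1} := by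
  set H := {z ∈ P.carrier | pairing w z = 1} with hH
  have hSH : S ⊆ H := fun z hz => ⟨vert_mem (hS hz), hS1 z hz⟩
  have hw0 : w ≠ 0 := by
    rintro rfl
    have := hS1 p hp
    rw [pairing_zero_left] at this
    exact zero_ne_one this
  refine ⟨⟨w, hw0, 1, le_of_verts hw, rfl⟩, ⟨p, hSH hp⟩, ?_⟩
  have htop : vectorSpan ℝ H ⊔ Submodule.span ℝ {p} = ⊤ := by
    rw [eq_top_iff, ← hsp.span_eq_top]
    exact (Submodule.span_mono hSH).trans (span_le_vectorSpan_sup (hSH hp))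
  have h1 := Submodule.finrank_add_le_finrank_add_finrank (vectorSpan ℝ H) (Submodule.span ℝ {p})
  rw [htop, finrank_top, Module.finrank_fin_fun] at h1
  have h2 : Module.finrank ℝ (Submodule.span ℝ {p}) ≤ 1 := by
    simpa using finrank_span_le_card (R := ℝ) ({p} : Set (Fin d → ℝ))
  have h3 : vectorSpan ℝ H < ⊤ := by
    refine lt_of_le_of_ne le_top fun h => ?_
    have hmem : p ∈ vectorSpan ℝ H := h ▸ Submodule.mem_top
    have hz : pairing w p = 0 := vectorSpan_le_ker (S := H) (fun z hz => hz.2) hmem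
    linarith [hS1 p hp]
  have h4 := Submodule.finrank_lt_finrank_of_lt h3
  rw [finrank_top, Module.finrank_fin_fun] at h4
  omega

/-- In a simplicial polytope, a facet containing all vertices of `F` but `v` has at most one
vertex outside `F`. -/
lemma eq_of_not_mem (hsimp : P.IsSimplicial) {F G : Set (Fin d → ℝ)} (hF : P.IsFacet F)
    (hG : P.IsFacet G) {v : Fin d → ℝ} (hv : v ∈ P.vertsOn F)
    (hsub : ∀ w ∈ P.vertsOn F, w ≠ v → w ∈ G) {p q : Fin d → ℝ}
    (hp : p ∈ P.vertsOn G) (hq : q ∈ P.vertsOn G) (hpF : p ∉ F) (hqF : q ∉ F) : p = q := by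
  by_contra hpq
  have hfin : ∀ A, (P.vertsOn A).Finite := fun A => P.verts.finite_toSet.subset fun z hz => hz.1
  have hle : insert p (insert q (P.vertsOn F \ {v})) ⊆ P.vertsOn G := by
    rintro z (rfl | rfl | ⟨hz, hzv⟩)
    · exact hp
    · exact hq
    · exact ⟨hz.1, hsub z hz hzv⟩
  have hdfin : (P.vertsOn F \ {v}).Finite := (hfin F).subset Set.sdiff_subset
  have hcard := Set.ncard_le_ncard hle (hfin G)
  rw [Set.ncard_insert_of_notMem (by
      rintro (h | h)
      · exact hpq h
      · exact hpF h.1.2) (hdfin.insert q),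
    Set.ncard_insert_of_notMem (fun h => hqF h.1.2) hdfin,
    Set.ncard_sdiff_singleton_of_mem hv, hsimp F hF, hsimp G hG] at hcard
  omega

/-! ### Neighboring facets and rotation about a ridge -/

/-- If `⟨u_F, y⟩ = 0` and `⟨u_F^v, y⟩ = -1` for `y = n(F, v)`, the facet `N(F, v)` has functional
`u_F - u_F^v`, which is therefore integral. -/
lemma neighbor_functional (hrefl : P.IsReflexive) {F : Set (Fin d → ℝ)} (hF : P.IsFacet F)
    {v y uF uv : Fin d → ℝ} (huF : P.IsUF F uF) (huv : P.IsDualBasisElt F v uv)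
    {F' : Set (Fin d → ℝ)} (hF' : P.IsNeighborFacet F v F') (hy : y ∈ P.vertsOn F')
    (hy0 : pairing uF y = 0) (hy1 : pairing uv y = -1) :
    P.IsUF F' (uF - uv) ∧
      ∀ z ∈ P.verts, ∃ n : ℤ, pairing (uF - uv) z = n := by
  obtain ⟨u, hu⟩ := hrefl.2.2 F' hF'.1
  have hsp := hF.spanning huF
  set u' : Fin d → ℝ := fun i => (u i : ℝ) with hu'
  set L := u' - (uF - uv) with hLdef
  have hLz : ∀ z, pairing L z = pairing u' z - (pairing uF z - pairing uv z) := fun z => by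
    rw [hLdef, pairing_sub_left, pairing_sub_left]
  have hyv : pairing L y = 0 := by
    rw [hLz, hu y hy.2, hy0, hy1]
    norm_num
  -- `L` vanishes on `V(F) \ {v}`, so it is a multiple of `u_F^v`, and `y` detects the multiple
  have hLm : L = pairing L v • uv := by
    refine hsp.ext fun z hz => ?_
    rw [pairing_smul_left]
    by_cases hzv : z = v
    · rw [hzv, huv.1, mul_one]
    · rw [huv.2 z hz hzv, mul_zero, hLz, hu z (hF'.2.2 z hz hzv), huF z hz.2, huv.2 z hz hzv]
      norm_num
  have hLv : pairing L v = 0 := by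
    have h := hyv
    rw [hLm, pairing_smul_left, hy1] at h
    linarith
  have huu : uF - uv = u' := by
    rw [hLv, zero_smul] at hLm
    exact (sub_eq_zero.1 hLm).symm
  rw [huu]
  exact ⟨hu, fun z hz => pairing_int (hrefl.1 z hz)⟩

/-- Rotating a facet `F'` about a ridge. Let `S` be a set of vertices on `F'` such that the only
functionals vanishing on `S` are the multiples of `g`, and suppose `g ≥ 0` on the vertices of `F'`
while `g` is negative at some vertex of `P`. Then `u' - s g` is the functional of a facet for some
`s > 0`. -/
lemma exists_rotation {F' : Set (Fin d → ℝ)} {u' g x p : Fin d → ℝ}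
    (hle : ∀ z ∈ P.carrier, pairing u' z ≤ 1)
    (hF' : ∀ z ∈ P.verts, pairing u' z = 1 → z ∈ F')
    (hg : ∀ z ∈ P.vertsOn F', 0 ≤ pairing g z)
    {S : Set (Fin d → ℝ)} (hSP : S ⊆ P.verts) (hp : p ∈ S)
    (hS1 : ∀ z ∈ S, pairing u' z = 1) (hSg : ∀ z ∈ S, pairing g z = 0)
    (hS : ∀ L : Fin d → ℝ, (∀ z ∈ S, pairing L z = 0) → ∃ c : ℝ, L = c • g)
    (hx : x ∈ P.verts) (hxg : pairing g x < 0) :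
    ∃ s : ℝ, 0 < s ∧ P.IsFacet {z ∈ P.carrier | pairing (u' - s • g) z = 1} := by
  classical
  have hne : (P.verts.filter fun z => pairing g z < 0).Nonempty :=
    ⟨x, Finset.mem_filter.2 ⟨hx, hxg⟩⟩
  -- `s` is the largest value for which `u' - s g ≤ 1` on `P`, attained at the vertex `z₀`
  obtain ⟨z₀, hz₀, hmin⟩ := Finset.exists_min_image _
    (fun z => (1 - pairing u' z) / (-pairing g z)) hne
  obtain ⟨hz₀P, hz₀g⟩ := Finset.mem_filter.1 hz₀
  set s := (1 - pairing u' z₀) / (-pairing g z₀) with hs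
  have hspos : 0 < s := by
    refine div_pos (sub_pos.2 (lt_of_le_of_ne (hle z₀ (vert_mem hz₀P)) fun h => ?_)) (by linarith)
    linarith [hg z₀ ⟨hz₀P, hF' z₀ hz₀P h⟩]
  have hval : ∀ z, pairing (u' - s • g) z = pairing u' z - s * pairing g z := fun z => by
    rw [pairing_sub_left, pairing_smul_left]
  refine ⟨s, hspos, isFacet_of_spanning (S := insert z₀ S) (fun z hz => ?_) ?_ ?_ ?_
    (Set.mem_insert_of_mem _ hp)⟩
  · rw [hval]
    rcases lt_or_ge (pairing g z) 0 with h | h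
    · have h1 := hmin z (Finset.mem_filter.2 ⟨hz, h⟩)
      rw [le_div_iff₀ (by linarith)] at h1
      linarith
    · nlinarith [hle z (vert_mem hz), mul_nonneg hspos.le h]
  · exact Set.insert_subset hz₀P hSP
  · rintro z (rfl | hz)
    · rw [hval, hs]
      have : pairing g z ≠ 0 := hz₀g.ne
      field_simp
      ring
    · rw [hval, hS1 z hz, hSg z hz, mul_zero, sub_zero]
  · intro L hL
    obtain ⟨c, rfl⟩ := hS L fun z hz => hL z (Set.mem_insert_of_mem _ hz)
    have h := hL z₀ (Set.mem_insert _ _)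
    rw [pairing_smul_left] at h
    rcases mul_eq_zero.1 h with h | h
    · rw [h, zero_smul]
    · exact absurd h hz₀g.ne

/-- A vertex `x` with `⟨u_F, x⟩ = ⟨u_F^{v₁}, x⟩ = ⟨u_F^{v₂}, x⟩ = -1` forces
`⟨u_F^{v₂}, y₁⟩ = 0`, and `u_F - u_F^{v₁} - u_F^{v₂}` is then the functional of a facet. -/
lemma rotated_facet (hrefl : P.IsReflexive) (hsimp : P.IsSimplicial)
    {F F₁ F₂ : Set (Fin d → ℝ)} (hF : P.IsFacet F)
    {v₁ v₂ y₁ y₂ uF u₁ u₂ x : Fin d → ℝ} (hv₁ : v₁ ∈ P.vertsOn F) (hv₂ : v₂ ∈ P.vertsOn F)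
    (hvne : v₁ ≠ v₂)
    (hF₁ : P.IsNeighborFacet F v₁ F₁) (hy₁ : y₁ ∈ P.vertsOn F₁) (hy₁F : y₁ ∉ F)
    (hF₂ : P.IsNeighborFacet F v₂ F₂) (hy₂ : y₂ ∈ P.vertsOn F₂) (hy₂F : y₂ ∉ F)
    (hyne : y₁ ≠ y₂) (huF : P.IsUF F uF)
    (hy₁0 : pairing uF y₁ = 0) (hy₂0 : pairing uF y₂ = 0)
    (hu₁ : P.IsDualBasisElt F v₁ u₁) (hu₂ : P.IsDualBasisElt F v₂ u₂)
    (h₁ : pairing u₁ y₁ = -1) (h₂ : pairing u₂ y₂ = -1)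
    (hx : x ∈ P.verts) (hx0 : pairing uF x = -1) (hx1 : pairing u₁ x = -1)
    (hx2 : pairing u₂ x = -1) :
    pairing u₂ y₁ = 0 ∧ P.IsFacet {z ∈ P.carrier | pairing (uF - u₁ - u₂) z = 1} := by
  have h0 : (0 : Fin d → ℝ) ∈ P.carrier := interior_subset hrefl.2.1
  have hsp := hF.spanning huF
  obtain ⟨hU₁, -⟩ := neighbor_functional hrefl hF huF hu₁ hF₁ hy₁ hy₁0 h₁
  obtain ⟨hU₂, hint₂⟩ := neighbor_functional hrefl hF huF hu₂ hF₂ hy₂ hy₂0 h₂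
  obtain ⟨hle₁, hmem₁⟩ := hF₁.1.uF_spec h0 hU₁
  obtain ⟨hle₂, hmem₂⟩ := hF₂.1.uF_spec h0 hU₂
  have hv₁u₂ : pairing u₂ v₁ = 0 := hu₂.2 v₁ hv₁ hvne
  have hv₂u₁ : pairing u₁ v₂ = 0 := hu₁.2 v₂ hv₂ hvne.symm
  obtain ⟨a, ha⟩ : ∃ a : ℤ, pairing u₂ y₁ = a := by
    obtain ⟨n, hn⟩ := hint₂ y₁ hy₁.1
    rw [pairing_sub_left, hy₁0] at hn
    exact ⟨-n, by push_cast; linarith⟩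
  have ha0 : 0 ≤ a := by
    have hy₁P := vert_mem hy₁.1
    have hval : pairing (uF - u₂) y₁ = -a := by rw [pairing_sub_left, hy₁0, ha, zero_sub]
    have hle := hle₂ y₁ hy₁P
    have hne : pairing (uF - u₂) y₁ ≠ 1 := fun h => hyne <|
      eq_of_not_mem hsimp hF hF₂.1 hv₂ hF₂.2.2 ⟨hy₁.1, hmem₂ y₁ hy₁P h⟩ hy₂ hy₁F hy₂F
    rw [hval] at hle hne
    have h1 : (-a : ℤ) ≤ 1 := by exact_mod_cast hle
    have h2 : (-a : ℤ) ≠ 1 := by exact_mod_cast hne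
    omega
  have ha0' : (0 : ℝ) ≤ a := by exact_mod_cast ha0
  have hg : ∀ z, pairing (u₂ + (a : ℝ) • u₁) z = pairing u₂ z + a * pairing u₁ z := fun z => by
    rw [pairing_add_left, pairing_smul_left]
  set g := u₂ + (a : ℝ) • u₁ with hgdef
  have hgy : pairing g y₁ = 0 := by
    rw [hg, ha, h₁]
    ring
  have hgF : ∀ z ∈ P.vertsOn F, z ≠ v₁ → z ≠ v₂ → pairing g z = 0 := fun z hz hz1 hz2 => by
    rw [hg, hu₂.2 z hz hz2, hu₁.2 z hz hz1]
    ring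
  have hgv₂ : pairing g v₂ = 1 := by
    rw [hg, hu₂.1, hv₂u₁]
    ring
  have hv₁F₁ : v₁ ∉ F₁ := fun h => by
    have h' := hU₁ v₁ h
    rw [pairing_sub_left, huF v₁ hv₁.2, hu₁.1] at h'
    norm_num at h'
  have hgF₁ : ∀ z ∈ P.vertsOn F₁, 0 ≤ pairing g z := by
    intro z hz
    by_cases hzF : z ∈ F
    · by_cases hz2 : z = v₂
      · rw [hz2, hgv₂]
        exact zero_le_one
      · exact (hgF z ⟨hz.1, hzF⟩ (fun h => hv₁F₁ (h ▸ hz.2)) hz2).ge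
    · rw [eq_of_not_mem hsimp hF hF₁.1 hv₁ hF₁.2.2 hz hy₁ hzF hy₁F, hgy]
  have hgx : pairing g x = -(1 + a) := by
    rw [hg, hx2, hx1]
    ring
  -- `S` is the vertex set of the ridge of `F₁` opposite `v₂`
  obtain ⟨s, hs, hH⟩ := exists_rotation (F' := F₁) (u' := uF - u₁) (g := g) (x := x) (p := y₁)
    (S := insert y₁ (P.vertsOn F \ {v₁, v₂})) hle₁ (fun z hz => hmem₁ z (vert_mem hz)) hgF₁
    (by
      rintro z (rfl | hz)
      · exact hy₁.1
      · exact hz.1.1)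
    (Set.mem_insert _ _)
    (by
      rintro z (rfl | ⟨hz, hzn⟩)
      · exact hU₁ z hy₁.2
      · exact hU₁ z (hF₁.2.2 z hz fun h => hzn (Or.inl h)))
    (by
      rintro z (rfl | ⟨hz, hzn⟩)
      · exact hgy
      · exact hgF z hz (fun h => hzn (Or.inl h)) (fun h => hzn (Or.inr h)))
    (by
      intro L hL
      have hLm : L = pairing L v₁ • u₁ + pairing L v₂ • u₂ := by
        refine hsp.ext fun z hz => ?_
        rw [pairing_add_left, pairing_smul_left, pairing_smul_left]
        by_cases hz1 : z = v₁
        · rw [hz1, hu₁.1, hv₁u₂]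
          ring
        by_cases hz2 : z = v₂
        · rw [hz2, hu₂.1, hv₂u₁]
          ring
        rw [hu₁.2 z hz hz1, hu₂.2 z hz hz2,
          hL z (Or.inr ⟨hz, fun h => h.elim hz1 hz2⟩)]
        ring
      have hLy := hL y₁ (Set.mem_insert _ _)
      rw [hLm, pairing_add_left, pairing_smul_left, pairing_smul_left, h₁, ha] at hLy
      refine ⟨pairing L v₂, ?_⟩
      have hco : pairing L v₁ = pairing L v₂ * a := by linarith
      rw [hgdef, smul_add, smul_smul, ← hco, add_comm]
      exact hLm)
    hx (by rw [hgx]; linarith)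
  have hval : ∀ z, pairing (uF - u₁ - s • g) z
      = pairing uF z - pairing u₁ z - s * pairing g z := fun z => by
    rw [pairing_sub_left, pairing_sub_left, pairing_smul_left]
  -- the functional is integral by reflexivity, and its value at `v₂` is `1 - s`
  obtain ⟨n, hn⟩ : ∃ n : ℤ, s = n := by
    obtain ⟨u, hu⟩ := hrefl.2.2 _ hH
    have heq : uF - u₁ - s • g = fun i => (u i : ℝ) :=
      (hH.spanning hu).ext fun z hz => by rw [hz.2.2, hu z hz.2]
    obtain ⟨m, hm⟩ := pairing_int (u := u) (hrefl.1 v₂ hv₂.1)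
    rw [← heq, hval, huF v₂ hv₂.2, hv₂u₁, hgv₂] at hm
    exact ⟨1 - m, by push_cast; linarith⟩
  have hHU : P.IsUF {z ∈ P.carrier | pairing (uF - u₁ - s • g) z = 1} (uF - u₁ - s • g) :=
    fun z hz => hz.2
  have hxle := (hH.uF_spec h0 hHU).1 x (vert_mem hx)
  rw [hval, hx0, hx1, hgx, hn] at hxle
  have hn0 : 0 < n := by
    rw [hn] at hs
    exact_mod_cast hs
  have hna : n * (1 + a) ≤ 1 := by
    have : (n : ℝ) * (1 + a) ≤ 1 := by linarith
    exact_mod_cast this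
  have hn1 : n = 1 := by nlinarith
  have haz : a = 0 := by
    rw [hn1] at hna
    omega
  refine ⟨by rw [ha, haz, Int.cast_zero], ?_⟩
  have hfun : uF - u₁ - s • g = uF - u₁ - u₂ := by
    rw [hgdef, hn, hn1, haz]
    simp
  rwa [hfun] at hH

end Polytope

/-! ### The two rotated facets coincide -/

/-- Lemma (`smalllemma`): let `v₁ ≠ v₂` be vertices of a facet `F` of a simplicial
reflexive polytope with neighboring vertices `y₁ = n(F, v₁)`, `y₂ = n(F, v₂)`,
`y₁ ≠ y₂`, both in `H(F,0)`, with `⟨u_F^{v₁}, y₁⟩ = ⟨u_F^{v₂}, y₂⟩ = -1`. Then no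
vertex `x` of `P` has `⟨u_F, x⟩ = -1` and `⟨u_F^{v₁}, x⟩ = ⟨u_F^{v₂}, x⟩ = -1`. -/
theorem no_vertex_with_two_neg_coords {d : ℕ} (P : Polytope d)
    (hrefl : P.IsReflexive) (hsimp : P.IsSimplicial)
    (F : Set (Fin d → ℝ)) (hF : P.IsFacet F)
    (v₁ v₂ : Fin d → ℝ) (hv₁ : v₁ ∈ P.vertsOn F) (hv₂ : v₂ ∈ P.vertsOn F)
    (hvne : v₁ ≠ v₂)
    (y₁ y₂ : Fin d → ℝ) (hy₁ : P.IsNeighborVertex F v₁ y₁)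
    (hy₂ : P.IsNeighborVertex F v₂ y₂) (hyne : y₁ ≠ y₂)
    (uF : Fin d → ℝ) (huF : P.IsUF F uF)
    (hy₁0 : pairing uF y₁ = 0) (hy₂0 : pairing uF y₂ = 0)
    (uFv₁ : Fin d → ℝ) (huFv₁ : P.IsDualBasisElt F v₁ uFv₁)
    (uFv₂ : Fin d → ℝ) (huFv₂ : P.IsDualBasisElt F v₂ uFv₂)
    (h₁ : pairing uFv₁ y₁ = -1) (h₂ : pairing uFv₂ y₂ = -1) :
    ¬ ∃ x ∈ P.verts, pairing uF x = -1 ∧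
      pairing uFv₁ x = -1 ∧ pairing uFv₂ x = -1 := by
  rintro ⟨x, hx, hx0, hx1, hx2⟩
  obtain ⟨F₁, hF₁, hy₁F₁, hy₁F⟩ := hy₁
  obtain ⟨F₂, hF₂, hy₂F₂, hy₂F⟩ := hy₂
  obtain ⟨ha, hH⟩ := Polytope.rotated_facet hrefl hsimp hF hv₁ hv₂ hvne hF₁ hy₁F₁ hy₁F hF₂ hy₂F₂
    hy₂F hyne huF hy₁0 hy₂0 huFv₁ huFv₂ h₁ h₂ hx hx0 hx1 hx2
  obtain ⟨hb, -⟩ := Polytope.rotated_facet hrefl hsimp hF hv₂ hv₁ hvne.symm hF₂ hy₂F₂ hy₂F hF₁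
    hy₁F₁ hy₁F hyne.symm huF hy₂0 hy₁0 huFv₂ huFv₁ h₂ h₁ hx hx0 hx2 hx1
  obtain ⟨hU₁, -⟩ := Polytope.neighbor_functional hrefl hF huF huFv₁ hF₁ hy₁F₁ hy₁0 h₁
  have hval : ∀ z, pairing (uF - uFv₁ - uFv₂) z
      = pairing uF z - pairing uFv₁ z - pairing uFv₂ z := fun z => by
    rw [pairing_sub_left, pairing_sub_left]
  -- with `b = 0`, both `x` and `y₂` lie on the rotated facet `u_F - u_F^{v₁} - u_F^{v₂} = 1`,
  -- which shares the ridge opposite `v₂` with `F₁`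
  have hxy : x = y₂ := by
    refine Polytope.eq_of_not_mem hsimp hF₁.1 hH ⟨hv₂.1, hF₁.2.2 v₂ hv₂ hvne.symm⟩
      (fun w hw hw2 => ⟨Polytope.vert_mem hw.1, ?_⟩)
      ⟨hx, Polytope.vert_mem hx, ?_⟩ ⟨hy₂F₂.1, Polytope.vert_mem hy₂F₂.1, ?_⟩
      (fun h => ?_) (fun h => ?_)
    · by_cases hwF : w ∈ F
      · have h := hU₁ w hw.2
        rw [pairing_sub_left] at h
        rw [hval, huFv₂.2 w ⟨hw.1, hwF⟩ hw2, h, sub_zero]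
      · rw [Polytope.eq_of_not_mem hsimp hF hF₁.1 hv₁ hF₁.2.2 hw hy₁F₁ hwF hy₁F, hval, hy₁0, h₁, ha]
        norm_num
    · rw [hval, hx0, hx1, hx2]
      norm_num
    · rw [hval, hy₂0, hb, h₂]
      norm_num
    · have h' := hU₁ x h
      rw [pairing_sub_left, hx0, hx1] at h'
      norm_num at h'
    · have h' := hU₁ y₂ h
      rw [pairing_sub_left, hy₂0, hb] at h'
      norm_num at h'
  rw [hxy, hy₂0] at hx0
  norm_num at hx0
end
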